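/- Let L be a ℤ-graded Lie conformal algebra of class 𝒱 such that p_{−1,1} and p_{0,1} are nonzero constants (elements of ℂ*). Then: L ≅ Cur sl(2,ℂ) if p_{1,1} = 0 and p_{−1,−1} = 0; L ≅ M(2) if p_{1,1} ≠ 0 and p_{−1,−1} ≠ 0; and L ≅ M(1) in the remaining cases (exactly one of p_{1,1}, p_{−1,−1} nonzero). -/

import Mathlib

open scoped BigOperators Classical ENNReal
open Polynomial

noncomputable section

/-- A Lie conformal algebra over `ℂ`, encoded via its `n`-th products
`a_(n) b` and the operator `∂ = D`.  The `λ`-bracket is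
`[a_λ b] = ∑ₙ (λⁿ/n!) • (a_(n) b)`. -/
structure LieConformalAlgebra (L : Type) [AddCommGroup L] [Module ℂ L] : Type where
  D : L →ₗ[ℂ] L
  prd : ℕ → L →ₗ[ℂ] L →ₗ[ℂ] L
  bound : ∀ a b : L, ∃ N : ℕ, ∀ n : ℕ, N ≤ n → prd n a b = 0
  sesq : ∀ (n : ℕ) (a b : L), prd n (D a) b = (-(n : ℂ)) • prd (n - 1) a b
  sesq' : ∀ (n : ℕ) (a b : L),
    prd n a (D b) = D (prd n a b) + (n : ℂ) • prd (n - 1) a b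
  skew : ∀ (n : ℕ) (a b : L),
    prd n a b
      = - ∑ᶠ j : ℕ, ((-1 : ℂ) ^ (n + j) * ((Nat.factorial j : ℂ))⁻¹) • (⇑D)^[j] (prd (n + j) b a)
  jacobi : ∀ (m n : ℕ) (a b c : L),
    prd m a (prd n b c) - prd n b (prd m a c)
      = ∑ j ∈ Finset.range (m + 1), (Nat.choose m j : ℂ) • prd (m + n - j) (prd j a b) c

namespace LieConformalAlgebra

variable {L : Type} [AddCommGroup L] [Module ℂ L]

/-- The action of a polynomial `q(∂) ∈ ℂ[∂]` on an element. -/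
def applyP (C : LieConformalAlgebra L) (q : Polynomial ℂ) (x : L) : L :=
  q.sum fun k c => c • (⇑C.D)^[k] x

/-- `[a_λ b] = p(∂, λ) • t`, where `p ∈ ℂ[∂][λ]` is a two-variable polynomial
(outer variable `λ`, inner variable `∂`). -/
def BracketEq (C : LieConformalAlgebra L) (a b t : L) (p : Polynomial (Polynomial ℂ)) : Prop :=
  ∀ n : ℕ, C.prd n a b = (Nat.factorial n : ℂ) • C.applyP (p.coeff n) t

def IsSubalgebra (C : LieConformalAlgebra L) (N : Submodule ℂ L) : Prop :=
  (∀ x ∈ N, C.D x ∈ N) ∧ ∀ n : ℕ, ∀ a ∈ N, ∀ b ∈ N, C.prd n a b ∈ N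

def IsIdeal (C : LieConformalAlgebra L) (N : Submodule ℂ L) : Prop :=
  (∀ x ∈ N, C.D x ∈ N) ∧ ∀ (n : ℕ) (a : L), ∀ b ∈ N, C.prd n a b ∈ N

/-- `L` is finitely generated as a Lie conformal algebra (finite type). -/
def FiniteType (C : LieConformalAlgebra L) : Prop :=
  ∃ s : Finset L, ∀ N : Submodule ℂ L, C.IsSubalgebra N → (s : Set L) ⊆ (N : Set L) → N = ⊤

/-- `L` is finitely generated as a `ℂ[∂]`-module. -/
def FGPolyModule (C : LieConformalAlgebra L) : Prop :=
  ∃ s : Finset L, ∀ N : Submodule ℂ L, (∀ x ∈ N, C.D x ∈ N) → (s : Set L) ⊆ (N : Set L) → N = ⊤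

/-- Iterated adjoint action `a₁_(k₁)(a₂_(k₂)(⋯ x))`. -/
def iterPrd (C : LieConformalAlgebra L) : List (L × ℕ) → L → L
  | [], x => x
  | (a, k) :: t, x => C.prd k a (iterPrd C t x)

/-- The `ℂ[∂]`-rank of the submodule `N` is at most `r`:
any `r+1` elements of `N` are `ℂ[∂]`-linearly dependent. -/
def polyRankLE (C : LieConformalAlgebra L) (N : Submodule ℂ L) (r : ℕ) : Prop :=
  ∀ v : Fin (r + 1) → L, (∀ k, v k ∈ N) →
    ∃ q : Fin (r + 1) → Polynomial ℂ, (∃ k, q k ≠ 0) ∧ ∑ k, C.applyP (q k) (v k) = 0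

/-- The family `v` is a free `ℂ[∂]`-basis of `L`. -/
def IsFreePolyBasis (C : LieConformalAlgebra L) {ι : Type} (v : ι → L) : Prop :=
  LinearIndependent ℂ (fun q : ι × ℕ => (⇑C.D)^[q.2] (v q.1)) ∧
  Submodule.span ℂ (Set.range fun q : ι × ℕ => (⇑C.D)^[q.2] (v q.1)) = ⊤

/-- `[U_λ V]`: the `ℂ`-span of all `u_(n) v`. -/
def bspan (C : LieConformalAlgebra L) (U V : Set L) : Submodule ℂ L :=
  Submodule.span ℂ {x : L | ∃ (n : ℕ) (u : L) (w : L), u ∈ U ∧ w ∈ V ∧ x = C.prd n u w}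

end LieConformalAlgebra

/-- `∂` as an element of `ℂ[∂][λ]`. -/
def Pd : Polynomial (Polynomial ℂ) := Polynomial.C Polynomial.X
/-- `λ` as an element of `ℂ[∂][λ]`. -/
def Pl : Polynomial (Polynomial ℂ) := Polynomial.X
/-- a constant in `ℂ[∂][λ]`. -/
def Pc (a : ℂ) : Polynomial (Polynomial ℂ) := Polynomial.C (Polynomial.C a)

/-- Total degree of a two-variable polynomial in `ℂ[∂][λ]`. -/
def tdeg (p : Polynomial (Polynomial ℂ)) : ℕ :=
  p.support.sup fun n => n + (p.coeff n).natDegree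

section ModelPolynomials

/-- structure polynomials of `𝒱(s)` -/
def pV (s : ℂ) (i j : ℤ) : Polynomial (Polynomial ℂ) :=
  Pd + Pc 2 * Pl + Pc (s * ((i : ℂ) - (j : ℂ)))

/-- structure polynomials of `CL₁(s)` -/
def pCL1 (s : ℂ) (i j : ℤ) : Polynomial (Polynomial ℂ) :=
  Pc ((i : ℂ) + 1) * Pd + Pc ((i : ℂ) + (j : ℂ) + 2) * Pl + Pc (s * ((i : ℂ) - (j : ℂ)))

/-- structure polynomials of `CL₂(b,s)` -/
def pCL2 (b s : ℂ) (i j : ℤ) : Polynomial (Polynomial ℂ) :=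
  Pc ((i : ℂ) + b) * Pd + Pc ((i : ℂ) + (j : ℂ) + 2 * b) * Pl + Pc (s * ((i : ℂ) - (j : ℂ)))

/-- structure polynomials of `SCL₂(b,s)` (for `2b ∈ ℤ`), w.r.t. the basis
`L'ᵢ = Lᵢ (i ≠ -2b)`, `L'_{-2b} = (∂+2s)L_{-2b}` of the corresponding graded
subalgebra of `CL₂(b,s)`. -/
def pSCL2 (b s : ℂ) (i j : ℤ) : Polynomial (Polynomial ℂ) :=
  (if (i : ℂ) = -(2 * b) then Pc (2 * s) - Pl else 1) *
  (if (j : ℂ) = -(2 * b) then Pd + Pl + Pc (2 * s) else 1) *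
  (if (i : ℂ) + (j : ℂ) = -(2 * b) then Pc ((i : ℂ) + b) else pCL2 b s i j)

/-- structure polynomials of `CL₃(s)` -/
def pCL3 (s : ℂ) (i j : ℤ) : Polynomial (Polynomial ℂ) :=
  if i + j = 0 then Pc (i : ℂ) * (Pd + Pc s)
  else if i = 0 then Pc (-(j : ℂ)) * (Pc (2 * s) - Pl)
  else if j = 0 then Pc (i : ℂ) * (Pd + Pl + Pc (2 * s))
  else Pc (i : ℂ) * Pd + Pc ((i : ℂ) + (j : ℂ)) * Pl + Pc (s * ((i : ℂ) - (j : ℂ)))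

/-- structure polynomials of `ECL(s)` -/
def pECL (s : ℂ) (i j : ℤ) : Polynomial (Polynomial ℂ) :=
  if i + j = 0 then Pc (i : ℂ) * (Pd + Pc s) * (Pd + Pc (2 * s))
  else if i = 0 then Pc (-(j : ℂ))
  else if j = 0 then Pc (i : ℂ)
  else Pc (i : ℂ) * Pd + Pc ((i : ℂ) + (j : ℂ)) * Pl + Pc (s * ((i : ℂ) - (j : ℂ)))

/-- structure polynomials of `M(1)` (indices `≥ -1`, completed by skew-symmetry) -/
def pM1 (i j : ℤ) : Polynomial (Polynomial ℂ) :=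
  if i = 1 ∧ j = 1 then Pd + Pc 2 * Pl
  else if i = -1 ∧ 1 ≤ j then Pc (((j : ℂ) + 1) * ((j : ℂ) - 2) / 2)
  else if j = -1 ∧ 1 ≤ i then Pc (-(((i : ℂ) + 1) * ((i : ℂ) - 2) / 2))
  else if i = 0 then Pc (-(j : ℂ))
  else if j = 0 then Pc (i : ℂ)
  else if i = 1 ∧ 2 ≤ j then 1
  else if j = 1 ∧ 2 ≤ i then -1
  else 0

/-- structure polynomials of `M(2)` (completed by skew-symmetry) -/
def pM2 (i j : ℤ) : Polynomial (Polynomial ℂ) :=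
  if i = 1 ∧ j = 1 then Pd + Pc 2 * Pl
  else if i = -1 ∧ j = -1 then Pd + Pc 2 * Pl
  else if i = 0 then Pc (-(j : ℂ))
  else if j = 0 then Pc (i : ℂ)
  else if i = -1 ∧ 1 ≤ j then Pc (((j : ℂ) + 1) * ((j : ℂ) - 2) / 2)
  else if j = -1 ∧ 1 ≤ i then Pc (-(((i : ℂ) + 1) * ((i : ℂ) - 2) / 2))
  else if i = 1 ∧ j ≤ -2 then Pc (((j : ℂ) - 1) * ((j : ℂ) + 2) / 2)
  else if j = 1 ∧ i ≤ -2 then Pc (-(((i : ℂ) - 1) * ((i : ℂ) + 2) / 2))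
  else if i = -1 ∧ j ≤ -2 then 1
  else if j = -1 ∧ i ≤ -2 then -1
  else if i = 1 ∧ 2 ≤ j then 1
  else if j = 1 ∧ 2 ≤ i then -1
  else 0

end ModelPolynomials

namespace LieConformalAlgebra

variable {L : Type} [AddCommGroup L] [Module ℂ L]

/-- `C` is isomorphic to the Virasoro Lie conformal algebra. -/
def IsVir (C : LieConformalAlgebra L) : Prop :=
  ∃ e : L, C.IsFreePolyBasis (fun _ : Unit => e) ∧ C.BracketEq e e e (Pd + Pc 2 * Pl)

/-- `C` is isomorphic to the loop Virasoro Lie conformal algebra `𝒱(s)`. -/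
def IsV (C : LieConformalAlgebra L) (s : ℂ) : Prop :=
  ∃ v : ℤ → L, C.IsFreePolyBasis v ∧
    ∀ i j : ℤ, C.BracketEq (v i) (v j) (v (i + j)) (pV s i j)

/-- `C` is isomorphic to `CL₁(s)`. -/
def IsCL1 (C : LieConformalAlgebra L) (s : ℂ) : Prop :=
  ∃ v : ℤ → L, C.IsFreePolyBasis (fun q : {i : ℤ // -1 ≤ i} => v q.1) ∧
    ∀ i j : ℤ, -1 ≤ i → -1 ≤ j →
      C.BracketEq (v i) (v j) (if -1 ≤ i + j then v (i + j) else 0) (pCL1 s i j)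

/-- `C` is isomorphic to `CL₂(b,s)`. -/
def IsCL2 (C : LieConformalAlgebra L) (b s : ℂ) : Prop :=
  ∃ v : ℤ → L, C.IsFreePolyBasis v ∧
    ∀ i j : ℤ, C.BracketEq (v i) (v j) (v (i + j)) (pCL2 b s i j)

/-- `C` is isomorphic to `SCL₂(b,s)`. -/
def IsSCL2 (C : LieConformalAlgebra L) (b s : ℂ) : Prop :=
  ∃ v : ℤ → L, C.IsFreePolyBasis v ∧
    ∀ i j : ℤ, C.BracketEq (v i) (v j) (v (i + j)) (pSCL2 b s i j)

/-- `C` is isomorphic to `CL₃(s)`. -/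
def IsCL3 (C : LieConformalAlgebra L) (s : ℂ) : Prop :=
  ∃ v : ℤ → L, C.IsFreePolyBasis v ∧
    ∀ i j : ℤ, C.BracketEq (v i) (v j) (v (i + j)) (pCL3 s i j)

/-- `C` is isomorphic to `ECL(s)`. -/
def IsECL (C : LieConformalAlgebra L) (s : ℂ) : Prop :=
  ∃ v : ℤ → L, C.IsFreePolyBasis v ∧
    ∀ i j : ℤ, C.BracketEq (v i) (v j) (v (i + j)) (pECL s i j)

/-- `C` is isomorphic to `M(1)`. -/
def IsM1 (C : LieConformalAlgebra L) : Prop :=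
  ∃ v : ℤ → L, C.IsFreePolyBasis (fun q : {i : ℤ // -1 ≤ i} => v q.1) ∧
    ∀ i j : ℤ, -1 ≤ i → -1 ≤ j →
      C.BracketEq (v i) (v j) (if -1 ≤ i + j then v (i + j) else 0) (pM1 i j)

/-- `C` is isomorphic to `M(2)`. -/
def IsM2 (C : LieConformalAlgebra L) : Prop :=
  ∃ v : ℤ → L, C.IsFreePolyBasis v ∧
    ∀ i j : ℤ, C.BracketEq (v i) (v j) (v (i + j)) (pM2 i j)

/-- `C` is isomorphic to the current Lie conformal algebra `Cur 𝔤`. -/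
def IsCur (C : LieConformalAlgebra L) (g : Type) [LieRing g] [LieAlgebra ℂ g] : Prop :=
  ∃ φ : g →ₗ[ℂ] L,
    Function.Bijective (fun f : ℕ →₀ g => f.sum fun k x => (⇑C.D)^[k] (φ x)) ∧
    (∀ x y : g, C.prd 0 (φ x) (φ y) = φ ⁅x, y⁆) ∧
    ∀ n : ℕ, 1 ≤ n → ∀ x y : g, C.prd n (φ x) (φ y) = 0

/-- `C ≅ Cur sl(2,ℂ)`. -/
def IsCurSl2 (C : LieConformalAlgebra L) : Prop :=
  C.IsCur ↥(LieAlgebra.SpecialLinear.sl (Fin 2) ℂ)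

/-- `C ≅ Cur 𝒲`, `𝒲` the Witt algebra (basis `wᵢ`, `[wᵢ,wⱼ] = (j-i)w_{i+j}`). -/
def IsCurWitt (C : LieConformalAlgebra L) : Prop :=
  ∃ v : ℤ → L, C.IsFreePolyBasis v ∧
    (∀ i j : ℤ, C.prd 0 (v i) (v j) = (((j : ℂ) - (i : ℂ))) • v (i + j)) ∧
    ∀ n : ℕ, 1 ≤ n → ∀ i j : ℤ, C.prd n (v i) (v j) = 0

/-- `C ≅ Cur 𝒲₁`, `𝒲₁` spanned by the `wᵢ`, `i ≥ -1`. -/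
def IsCurWitt1 (C : LieConformalAlgebra L) : Prop :=
  ∃ v : ℤ → L, C.IsFreePolyBasis (fun q : {i : ℤ // -1 ≤ i} => v q.1) ∧
    (∀ i j : ℤ, -1 ≤ i → -1 ≤ j →
      C.prd 0 (v i) (v j) = (((j : ℂ) - (i : ℂ))) • (if -1 ≤ i + j then v (i + j) else 0)) ∧
    ∀ n : ℕ, 1 ≤ n → ∀ i j : ℤ, -1 ≤ i → -1 ≤ j → C.prd n (v i) (v j) = 0

end LieConformalAlgebra

/-- A `ℤ`-graded Lie conformal algebra. -/
structure GradedLCA (L : Type) [AddCommGroup L] [Module ℂ L]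
    extends LieConformalAlgebra L where
  G : ℤ → Submodule ℂ L
  internal : DirectSum.IsInternal G
  dGrade : ∀ i : ℤ, ∀ x ∈ G i, D x ∈ G i
  prdGrade : ∀ (i j : ℤ) (n : ℕ), ∀ a ∈ G i, ∀ b ∈ G j, prd n a b ∈ G (i + j)

namespace GradedLCA

variable {L : Type} [AddCommGroup L] [Module ℂ L]

/-- A graded ideal: an ideal generated by homogeneous elements. -/
def IsGradedIdeal (C : GradedLCA L) (N : Submodule ℂ L) : Prop :=
  C.toLieConformalAlgebra.IsIdeal N ∧ (⨆ i : ℤ, N ⊓ C.G i) = N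

/-- `L` is simple graded: nonzero bracket, and the only graded ideals are `⊥` and `⊤`. -/
def IsSimpleGraded (C : GradedLCA L) : Prop :=
  (∃ (n : ℕ) (a b : L), C.prd n a b ≠ 0) ∧
  ∀ N : Submodule ℂ L, C.IsGradedIdeal N → N = ⊥ ∨ N = ⊤

/-- `[L_λ L] = L`. -/
def Perfect (C : GradedLCA L) : Prop :=
  Submodule.span ℂ {x : L | ∃ (n : ℕ) (a b : L), x = C.prd n a b} = ⊤

/-- Each component `L_i` is a nilpotent `L₀`-module under the adjoint action. -/
def Rootless (C : GradedLCA L) : Prop :=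
  ∀ i : ℤ, ∃ n : ℕ, 1 ≤ n ∧ ∀ l : List (L × ℕ), l.length = n →
    (∀ q ∈ l, q.1 ∈ C.G 0) → ∀ x ∈ C.G i, C.toLieConformalAlgebra.iterPrd l x = 0

/-- The ranks of the components are uniformly bounded. -/
def UniformlyBounded (C : GradedLCA L) : Prop :=
  ∃ N : ℕ, 1 ≤ N ∧ ∀ i : ℤ, C.toLieConformalAlgebra.polyRankLE (C.G i) N

end GradedLCA

/-- A module over a Lie conformal algebra, encoded via the `n`-th actions. -/
structure LCAModule {L : Type} [AddCommGroup L] [Module ℂ L] (C : LieConformalAlgebra L)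
    (M : Type) [AddCommGroup M] [Module ℂ M] : Type where
  DM : M →ₗ[ℂ] M
  act : ℕ → L →ₗ[ℂ] M →ₗ[ℂ] M
  bound : ∀ (a : L) (m : M), ∃ N : ℕ, ∀ n : ℕ, N ≤ n → act n a m = 0
  sesq : ∀ (n : ℕ) (a : L) (m : M), act n (C.D a) m = (-(n : ℂ)) • act (n - 1) a m
  sesq' : ∀ (n : ℕ) (a : L) (m : M),
    act n a (DM m) = DM (act n a m) + (n : ℂ) • act (n - 1) a m
  comm : ∀ (p q : ℕ) (a b : L) (m : M),
    act p a (act q b m) - act q b (act p a m)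
      = ∑ j ∈ Finset.range (p + 1), (Nat.choose p j : ℂ) • act (p + q - j) (C.prd j a b) m

namespace LCAModule

variable {L : Type} [AddCommGroup L] [Module ℂ L] {C : LieConformalAlgebra L}
variable {M : Type} [AddCommGroup M] [Module ℂ M]

/-- Iterated action `a₁_(k₁)(a₂_(k₂)(⋯ m))`. -/
def iterAct (ρ : LCAModule C M) : List (L × ℕ) → M → M
  | [], m => m
  | (a, k) :: t, m => ρ.act k a (iterAct ρ t m)

/-- `N` is an `L`-submodule of `M`. -/
def IsSub (ρ : LCAModule C M) (N : Submodule ℂ M) : Prop :=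
  (∀ m ∈ N, ρ.DM m ∈ N) ∧ ∀ (n : ℕ) (a : L), ∀ m ∈ N, ρ.act n a m ∈ N

/-- `M` is a nilpotent module. -/
def Nilpotent (ρ : LCAModule C M) : Prop :=
  ∃ n : ℕ, 1 ≤ n ∧ ∀ l : List (L × ℕ), l.length = n → ∀ m : M, ρ.iterAct l m = 0

/-- `M` is finitely generated as an `L`-module. -/
def FG (ρ : LCAModule C M) : Prop :=
  ∃ s : Finset M, ∀ N : Submodule ℂ M, ρ.IsSub N → (s : Set M) ⊆ (N : Set M) → N = ⊤

/-- The `L`-submodule `N` is finitely generated as an `L`-module. -/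
def FGIn (ρ : LCAModule C M) (N : Submodule ℂ M) : Prop :=
  ∃ s : Finset M, (s : Set M) ⊆ (N : Set M) ∧
    ∀ P : Submodule ℂ M, ρ.IsSub P → (s : Set M) ⊆ (P : Set M) → N ≤ P

/-- `M` is finitely generated as a `ℂ[∂]`-module. -/
def FGPoly (ρ : LCAModule C M) : Prop :=
  ∃ s : Finset M, ∀ N : Submodule ℂ M, (∀ m ∈ N, ρ.DM m ∈ N) → (s : Set M) ⊆ (N : Set M) → N = ⊤

end LCAModule

/-- A family is `ℂ[∂]`-linearly independent. -/
def polyIndep {M : Type} [AddCommGroup M] [Module ℂ M] (DM : M →ₗ[ℂ] M)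
    {r : ℕ} (v : Fin r → M) : Prop :=
  ∀ q : Fin r → Polynomial ℂ,
    (∑ k, (q k).sum fun t c => c • (⇑DM)^[t] (v k)) = 0 → ∀ k, q k = 0

/-- The `ℂ[∂]`-rank of a submodule, in `ℕ∞`. -/
def polyRank {M : Type} [AddCommGroup M] [Module ℂ M] (DM : M →ₗ[ℂ] M)
    (N : Submodule ℂ M) : ℕ∞ :=
  ⨆ r ∈ {r : ℕ | ∃ v : Fin r → M, (∀ k, v k ∈ N) ∧ polyIndep DM v}, (r : ℕ∞)

/-- A graded module over a `ℤ`-graded Lie conformal algebra. -/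
structure GradedLCAModule {L : Type} [AddCommGroup L] [Module ℂ L] (C : GradedLCA L)
    (M : Type) [AddCommGroup M] [Module ℂ M]
    extends LCAModule C.toLieConformalAlgebra M where
  GM : ℤ → Submodule ℂ M
  internal : DirectSum.IsInternal GM
  dGrade : ∀ i : ℤ, ∀ m ∈ GM i, DM m ∈ GM i
  actGrade : ∀ (i j : ℤ) (n : ℕ), ∀ a ∈ C.G i, ∀ m ∈ GM j, act n a m ∈ GM (i + j)

namespace GradedLCAModule

variable {L : Type} [AddCommGroup L] [Module ℂ L] {C : GradedLCA L}
variable {M : Type} [AddCommGroup M] [Module ℂ M]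

/-- `Mⁿ = ⊕_{|i| ≤ n} M_i`. -/
def seg (ρ : GradedLCAModule C M) (n : ℕ) : Submodule ℂ M :=
  ⨆ i : ℤ, ⨆ _ : |i| ≤ (n : ℤ), ρ.GM i

/-- `e(M) = liminf (1/n) rank_{ℂ[∂]} Mⁿ`. -/
def eM (ρ : GradedLCAModule C M) : ℝ≥0∞ :=
  Filter.atTop.liminf fun n : ℕ => (polyRank ρ.DM (ρ.seg n) : ℝ≥0∞) / (n : ℝ≥0∞)

/-- Each `M_i` is a nilpotent `L₀`-module. -/
def Weightless (ρ : GradedLCAModule C M) : Prop :=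
  ∀ i : ℤ, ∃ n : ℕ, 1 ≤ n ∧ ∀ l : List (L × ℕ), l.length = n →
    (∀ q ∈ l, q.1 ∈ C.G 0) → ∀ m ∈ ρ.GM i, ρ.toLCAModule.iterAct l m = 0

/-- The submodule `I(M)` generated by all homogeneous `v` lying in the span of
the iterated actions of `L` on `v`. -/
def IM (ρ : GradedLCAModule C M) : Submodule ℂ M :=
  sInf {N : Submodule ℂ M | ρ.toLCAModule.IsSub N ∧
    {v : M | (∃ i : ℤ, v ∈ ρ.GM i) ∧
      v ∈ Submodule.span ℂ
        {w : M | ∃ l : List (L × ℕ), 1 ≤ l.length ∧ w = ρ.toLCAModule.iterAct l v}} ⊆ N}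

end GradedLCAModule

/-- The structure context for graded Lie conformal algebras all of whose
nonzero components are free of rank one over `ℂ[∂]`: fixed homogeneous bases
`bas i` and structure polynomials `sp i j ∈ ℂ[∂][λ]`, with `0 ∈ Supp(L)` and
`L₀` abelian. -/
structure RankOneContext (L : Type) [AddCommGroup L] [Module ℂ L]
    extends GradedLCA L where
  bas : ℤ → L
  sp : ℤ → ℤ → Polynomial (Polynomial ℂ)
  bas_mem : ∀ i : ℤ, bas i ∈ G i
  bas_zero : ∀ i : ℤ, G i = ⊥ → bas i = 0
  bas_indep : ∀ i : ℤ, G i ≠ ⊥ → LinearIndependent ℂ fun k : ℕ => (⇑D)^[k] (bas i)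
  bas_span : ∀ i : ℤ, G i ≠ ⊥ →
    G i = Submodule.span ℂ (Set.range fun k : ℕ => (⇑D)^[k] (bas i))
  sp_brkt : ∀ (i j : ℤ) (n : ℕ),
    prd n (bas i) (bas j)
      = (Nat.factorial n : ℂ) • (((sp i j).coeff n).sum fun k c => c • (⇑D)^[k] (bas (i + j)))
  sp_zero : ∀ i j : ℤ, (G i = ⊥ ∨ G j = ⊥ ∨ G (i + j) = ⊥) → sp i j = 0
  supp_zero : G 0 ≠ ⊥
  abelian0 : ∀ n : ℕ, ∀ x ∈ G 0, ∀ y ∈ G 0, prd n x y = 0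

/-- A Lie conformal algebra of class `𝒱`. -/
structure ClassV (L : Type) [AddCommGroup L] [Module ℂ L]
    extends RankOneContext L where
  supp_one : G 1 ≠ ⊥
  supp_negone : G (-1) ≠ ⊥
  genV : ∀ N : Submodule ℂ L, (∀ x ∈ N, D x ∈ N) →
    (∀ n : ℕ, ∀ a ∈ N, ∀ b ∈ N, prd n a b ∈ N) →
    G 1 ≤ N → G 0 ≤ N → G (-1) ≤ N → N = ⊤
  ne_m11 : sp (-1) 1 ≠ 0
  ne_01 : sp 0 1 ≠ 0


namespace LieConformalAlgebra

variable {L : Type} [AddCommGroup L] [Module ℂ L]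

/-- constant bracket -/
def Cst (C : LieConformalAlgebra L) (a b x : L) : Prop :=
  C.prd 0 a b = x ∧ ∀ n, C.prd (n + 1) a b = 0

theorem Cst.symm {C : LieConformalAlgebra L} {a b x : L} (h : C.Cst a b x) :
    C.Cst b a (-x) := by
  constructor
  · rw [C.skew, finsum_eq_single _ 0]
    · simp [h.1]
    · intro j hj
      obtain ⟨k, rfl⟩ := Nat.exists_eq_succ_of_ne_zero hj
      have := h.2 k
      simp only [Nat.succ_eq_add_one, zero_add, this]
      rw [← Module.End.pow_apply, map_zero, smul_zero]
  · intro n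
    rw [C.skew, finsum_eq_zero_of_forall_eq_zero, neg_zero]
    intro j
    have := h.2 (n + j)
    rw [show n + 1 + j = n + j + 1 by ring, this, ← Module.End.pow_apply, map_zero, smul_zero]

theorem Cst.smul_left {C : LieConformalAlgebra L} {a b x : L} (h : C.Cst a b x) (c : ℂ) :
    C.Cst (c • a) b (c • x) := by
  refine ⟨by simp [h.1], fun n => by simp [h.2]⟩

theorem Cst.smul_right {C : LieConformalAlgebra L} {a b x : L} (h : C.Cst a b x) (c : ℂ) :
    C.Cst a (c • b) (c • x) := by
  refine ⟨by simp [h.1], fun n => by simp [h.2]⟩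

theorem Cst.neg_left {C : LieConformalAlgebra L} {a b x : L} (h : C.Cst a b x) :
    C.Cst (-a) b (-x) := by
  refine ⟨by simp [h.1], fun n => by simp [h.2]⟩

theorem Cst.zero_iff {C : LieConformalAlgebra L} {a b : L} :
    C.Cst a b 0 ↔ ∀ n, C.prd n a b = 0 := by
  constructor
  · rintro ⟨h, h'⟩ (_ | n)
    · exact h
    · exact h' n
  · intro h; exact ⟨h 0, fun n => h _⟩

/-- Jacobi when the inner bracket is constant -/
theorem Cst.jac {C : LieConformalAlgebra L} {a b x : L} (h : C.Cst a b x) (m n : ℕ) (c : L) :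
    C.prd m a (C.prd n b c) = C.prd n b (C.prd m a c) + C.prd (m + n) x c := by
  have := C.jacobi m n a b c
  rw [sub_eq_iff_eq_add, Finset.sum_range_succ', Finset.sum_eq_zero] at this
  · rw [this]; simp [h.1]; abel
  · intro j _; simp [h.2]

theorem jac0 (C : LieConformalAlgebra L) (n : ℕ) (a b c : L) :
    C.prd n (C.prd 0 a b) c = C.prd 0 a (C.prd n b c) - C.prd n b (C.prd 0 a c) := by
  rw [C.jacobi 0 n a b c]; simp

theorem applyP_range (C : LieConformalAlgebra L) (q : ℂ[X]) (y : L) :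
    C.applyP q y = ∑ k ∈ Finset.range (q.natDegree + 1), q.coeff k • (⇑C.D)^[k] y :=
  Polynomial.sum_over_range _ (by simp)

theorem top_D (C : LieConformalAlgebra L) (a y : L) (N : ℕ)
    (ht : ∀ n, N < n → C.prd n a y = 0) (k : ℕ) :
    (∀ n, N + k < n → C.prd n a ((⇑C.D)^[k] y) = 0) ∧
    ∃ c : ℂ, c ≠ 0 ∧ C.prd (N + k) a ((⇑C.D)^[k] y) = c • C.prd N a y := by
  induction k with
  | zero => exact ⟨by simpa using ht, 1, one_ne_zero, by simp⟩
  | succ k ih =>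
    obtain ⟨h1, c, hc, h2⟩ := ih
    constructor
    · intro n hn
      rw [Function.iterate_succ_apply', C.sesq', h1 n (by omega), h1 (n-1) (by omega)]
      simp
    · refine ⟨((N + (k+1) : ℕ) : ℂ) * c, mul_ne_zero (Nat.cast_ne_zero.2 (by omega)) hc, ?_⟩
      rw [Function.iterate_succ_apply', C.sesq', h1 (N+(k+1)) (by omega),
        show N + (k+1) - 1 = N + k by omega, h2]
      simp [mul_smul]

theorem applyP_top (C : LieConformalAlgebra L) (a y : L) (N : ℕ)
    (ht : ∀ n, N < n → C.prd n a y = 0) (q : ℂ[X]) (hq : q ≠ 0) :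
    ∃ c : ℂ, c ≠ 0 ∧ C.prd (N + q.natDegree) a (C.applyP q y) = c • C.prd N a y := by
  obtain ⟨c, hc, h⟩ := (C.top_D a y N ht q.natDegree).2
  refine ⟨q.leadingCoeff * c, mul_ne_zero (by simpa using hq) hc, ?_⟩
  rw [applyP_range, Finset.sum_range_succ, map_add, map_sum, Finset.sum_eq_zero]
  · simp [h, mul_smul]
  · intro k hk
    rw [map_smul, (C.top_D a y N ht k).1, smul_zero]
    have := Finset.mem_range.1 hk
    omega

theorem exists_top (f : ℕ → L) (hb : ∃ N, ∀ n, N ≤ n → f n = 0) (n0 : ℕ) (h0 : f n0 ≠ 0) :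
    ∃ N, n0 ≤ N ∧ f N ≠ 0 ∧ ∀ n, N < n → f n = 0 := by
  obtain ⟨B, hB⟩ := hb
  have h0B : n0 ≤ B := by
    by_contra h
    exact h0 (hB _ (by omega))
  refine ⟨Nat.findGreatest (fun n => f n ≠ 0) B, Nat.le_findGreatest h0B h0, 
    Nat.findGreatest_spec (P := fun n => f n ≠ 0) h0B h0, ?_⟩
  intro n hn
  by_cases hnB : n ≤ B
  · by_contra h
    have := Nat.findGreatest_is_greatest hn hnB
    exact this h
  · exact hB _ (by omega)

theorem prd_applyP_zero (C : LieConformalAlgebra L) (a y : L) (h : ∀ n, C.prd n a y = 0)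
    (q : ℂ[X]) (n : ℕ) : C.prd n a (C.applyP q y) = 0 := by
  have : ∀ k n, C.prd n a ((⇑C.D)^[k] y) = 0 := by
    intro k
    induction k with
    | zero => simpa using h
    | succ k ih => intro n; rw [Function.iterate_succ_apply', C.sesq', ih, ih]; simp
  rw [applyP_range, map_sum, Finset.sum_eq_zero]
  intro k _
  rw [map_smul, this, smul_zero]

/-- If `x ∈ ℂ[∂] y` has nonzero constant bracket with `a`, it is a scalar multiple of `y`. -/
theorem const_lemma (C : LieConformalAlgebra L) (a y x z : L) (q : ℂ[X])
    (hx : x = C.applyP q y) (h : C.Cst a x z) (hz : z ≠ 0) :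
    ∃ c : ℂ, c ≠ 0 ∧ x = c • y := by
  have hne : ∃ n, C.prd n a y ≠ 0 := by
    by_contra! hh
    apply hz
    rw [← h.1, hx]
    exact C.prd_applyP_zero a y hh q 0
  obtain ⟨n0, hn0⟩ := hne
  obtain ⟨N, -, hN, ht⟩ := exists_top (fun n => C.prd n a y) (C.bound a y) n0 hn0
  have hq : q ≠ 0 := by
    rintro rfl
    apply hz
    rw [← h.1, hx]; simp [applyP]
  obtain ⟨c, hc, he⟩ := C.applyP_top a y N ht q hq
  have h0 : N + q.natDegree = 0 := by
    by_contra hh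
    obtain ⟨k, hk⟩ := Nat.exists_eq_succ_of_ne_zero hh
    have := h.2 k
    rw [← Nat.succ_eq_add_one, ← hk, hx, he] at this
    exact (smul_ne_zero hc hN) this
  have hd : q.natDegree = 0 := by omega
  refine ⟨q.coeff 0, ?_, ?_⟩
  · rw [Polynomial.eq_C_of_natDegree_eq_zero hd] at hq
    simpa using hq
  · rw [hx, applyP_range, hd]; simp

theorem zero_lemma (C : LieConformalAlgebra L) (a y x : L) (q : ℂ[X])
    (hx : x = C.applyP q y) (hne : ∃ n, C.prd n a y ≠ 0) (h : ∀ n, C.prd n a x = 0) :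
    x = 0 := by
  obtain ⟨n0, hn0⟩ := hne
  obtain ⟨N, -, hN, ht⟩ := exists_top (fun n => C.prd n a y) (C.bound a y) n0 hn0
  by_cases hq : q = 0
  · rw [hx, hq]; simp [applyP]
  obtain ⟨c, hc, he⟩ := C.applyP_top a y N ht q hq
  rw [← hx, h] at he
  exact absurd he.symm (smul_ne_zero hc hN)

structure Triple (C : LieConformalAlgebra L) (E H F : L) : Prop where
  HE : C.Cst H E (-E)
  HF : C.Cst H F F
  FE : C.Cst F E (-H)
  HH : C.Cst H H 0

theorem Triple.flip {C : LieConformalAlgebra L} {E H F : L} (t : C.Triple E H F) :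
    C.Triple F (-H) E where
  HE := t.HF.neg_left
  HF := by simpa using t.HE.neg_left
  FE := by simpa using t.FE.symm
  HH := by rw [Cst.zero_iff]; intro n; simp [Cst.zero_iff.1 t.HH]

structure Tail (C : LieConformalAlgebra L) (E H F : L) (w : ℕ → L) : Prop where
  EE0 : C.prd 0 E E = C.D (w 0)
  EE1 : C.prd 1 E E = (2 : ℂ) • w 0
  EEn : ∀ n, C.prd (n + 2) E E = 0
  Ew : ∀ k, C.Cst E (w k) (w (k + 1))
  Hw : ∀ k : ℕ, C.Cst H (w k) ((-((k : ℂ) + 2)) • w k)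
  Fw0 : C.Cst F (w 0) 0
  Fws : ∀ k : ℕ, C.Cst F (w (k + 1)) ((((k : ℂ) + 4) * ((k : ℂ) + 1) / 2) • w k)

theorem EE_lemma (C : LieConformalAlgebra L) {E H F : L} (t : C.Triple E H F)
    (b : L) (hb : ∀ n, ∃ q, C.prd n E E = C.applyP q b) (hne : ∃ n, C.prd n E E ≠ 0) :
    (∀ n, C.prd (n + 2) E E = 0) ∧ C.prd 1 E E ≠ 0 ∧ (2 : ℂ) • C.prd 0 E E = C.D (C.prd 1 E E) ∧
    C.Cst H (C.prd 1 E E) ((-2 : ℂ) • C.prd 1 E E) ∧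
    C.Cst F (C.prd 1 E E) 0 ∧ ∃ c : ℂ, c ≠ 0 ∧ C.prd 1 E E = c • b := by
  have key : ∀ m n, C.prd (m + 1) H (C.prd n E E) = - C.prd (m + 1 + n) E E := by
    intro m n
    rw [t.HE.jac]; simp [t.HE.2]
  have key0 : ∀ n, C.prd 0 H (C.prd n E E) = (-2 : ℂ) • C.prd n E E := by
    intro n
    rw [t.HE.jac]; simp [t.HE.1]; module
  have topC : ∀ N, (∀ n, N < n → C.prd n E E = 0) →
      C.Cst H (C.prd N E E) ((-2 : ℂ) • C.prd N E E) := by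
    intro N hN
    refine ⟨key0 N, fun n => ?_⟩
    rw [key, hN _ (by omega), neg_zero]
  have h2 : ∀ n, C.prd (n + 2) E E = 0 := by
    by_contra! hh
    obtain ⟨n0, hn0⟩ := hh
    obtain ⟨N, hN2, hN, ht⟩ := exists_top (fun n => C.prd n E E) (C.bound E E) (n0+2) hn0
    obtain ⟨M, rfl⟩ : ∃ M, N = M + 2 := ⟨N - 2, by omega⟩
    have hc := topC _ ht
    obtain ⟨q, hq⟩ := hb (M+2)
    obtain ⟨c, hc0, hcb⟩ := C.const_lemma H b _ _ q hq hc (smul_ne_zero (by norm_num) hN)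
    -- on all of `ℂ[∂] b`
    have hb0 : C.Cst H b ((-2 : ℂ) • b) := by
      have : b = c⁻¹ • C.prd (M+2) E E := by rw [hcb, smul_smul, inv_mul_cancel₀ hc0, one_smul]
      rw [this]
      have h3 := hc.smul_right c⁻¹
      rwa [smul_comm] at h3
    have claim : ∀ k, C.prd 0 H ((⇑C.D)^[k] b) = (-2 : ℂ) • ((⇑C.D)^[k] b) ∧
        C.prd 0 H (C.prd 1 H ((⇑C.D)^[k] b)) = (-2 : ℂ) • C.prd 1 H ((⇑C.D)^[k] b) ∧
        C.prd 1 H (C.prd 1 H ((⇑C.D)^[k] b)) = (-2 : ℂ) • C.prd 2 H ((⇑C.D)^[k] b) := by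
      intro k
      induction k with
      | zero =>
        have e1 := hb0.2 0
        have e2 := hb0.2 1
        simp only [zero_add, Nat.reduceAdd] at e1 e2
        simp [hb0.1, e1, e2]
      | succ k ih =>
        obtain ⟨i1, i2, i3⟩ := ih
        have e0 := C.sesq' 0 H ((⇑C.D)^[k] b)
        have e1 := C.sesq' 1 H ((⇑C.D)^[k] b)
        have e2 := C.sesq' 2 H ((⇑C.D)^[k] b)
        have f0 := C.sesq' 0 H (C.prd 1 H ((⇑C.D)^[k] b))
        have f1 := C.sesq' 1 H (C.prd 1 H ((⇑C.D)^[k] b))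
        simp only [Nat.cast_zero, zero_smul, add_zero, Nat.cast_one, one_smul, Nat.sub_self,
          Nat.reduceSub, Nat.cast_ofNat] at e0 e1 e2 f0 f1
        rw [Function.iterate_succ_apply']
        refine ⟨by rw [e0, i1, map_smul], ?_, ?_⟩
        · rw [e1, map_add, f0, i2, i1, map_smul, map_smul, i1]; module
        · rw [e1, map_add, f1, i3, i2, i1, map_smul, map_smul, e2]; module
    obtain ⟨q, hq⟩ := hb M
    have claim2 : C.prd 1 H (C.prd 1 H (C.prd M E E)) = (-2 : ℂ) • C.prd 2 H (C.prd M E E) := by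
      rw [hq, applyP_range]
      simp only [map_sum, map_smul, Finset.smul_sum]
      refine Finset.sum_congr rfl fun k _ => ?_
      rw [(claim k).2.2, smul_comm]
    have k1 := key 0 M
    have k2 := key 1 M
    have k3 := key 0 (M+1)
    simp only [zero_add, Nat.reduceAdd] at k1 k2 k3
    rw [k1, k2, map_neg, add_comm 1 M, k3, show 1 + (M+1) = M + 2 by ring,
      show 2 + M = M + 2 by ring] at claim2
    apply hN
    have : C.prd (M+2) E E = (2:ℂ) • C.prd (M+2) E E := by
      rw [neg_neg] at claim2
      nth_rw 1 [claim2]; module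
    have h4 : (1:ℂ) • C.prd (M+2) E E = 0 := by
      have : (2:ℂ) • C.prd (M+2) E E - C.prd (M+2) E E = 0 := by rw [← this, sub_self]
      rw [← this]; module
    simpa using h4
  have hs : (2 : ℂ) • C.prd 0 E E = C.D (C.prd 1 E E) := by
    have := C.skew 0 E E
    rw [finsum_eq_sum_of_support_subset (s := Finset.range 2)] at this
    · simp only [Finset.sum_range_succ, Finset.sum_range_zero] at this
      simp at this
      have h5 : C.prd 0 E E + C.prd 0 E E = C.D (C.prd 1 E E) := by
        nth_rw 1 [this]; abel
      rw [← h5]; module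
    · intro j hj
      by_contra hj2
      apply hj
      simp at hj2
      obtain ⟨k, rfl⟩ : ∃ k, j = k + 2 := ⟨j - 2, by omega⟩
      have := h2 k
      simp only [zero_add, this]
      rw [← Module.End.pow_apply, map_zero, smul_zero]
  have h1 : C.prd 1 E E ≠ 0 := by
    intro h
    rw [h, map_zero] at hs
    obtain ⟨n, hn⟩ := hne
    rcases n with _ | _ | n
    · exact (smul_ne_zero (by norm_num) hn) hs
    · exact hn h
    · exact hn (h2 n)
  have hc := topC 1 (fun n hn => by
    obtain ⟨k, rfl⟩ : ∃ k, n = k + 2 := ⟨n - 2, by omega⟩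
    exact h2 k)
  obtain ⟨q, hq⟩ := hb 1
  refine ⟨h2, h1, hs, hc, ?_, C.const_lemma H b _ _ q hq hc (smul_ne_zero (by norm_num) h1)⟩
  rw [Cst.zero_iff]
  intro n
  rw [t.FE.jac]
  have hEH := t.HE.symm
  rcases n with _ | n
  · have e1 := t.HE.2 0
    have e2 := hEH.2 0
    simp only [zero_add] at e1 e2
    simp [t.FE.1, e1, e2]
  · rw [t.FE.2]
    have := t.HE.2 (n+1)
    simp [this]

end LieConformalAlgebra

namespace LieConformalAlgebra

variable {L : Type} [AddCommGroup L] [Module ℂ L]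

/-- the tail sequence -/
def tl (C : LieConformalAlgebra L) (E : L) : ℕ → L
  | 0 => (1 / 2 : ℂ) • C.prd 1 E E
  | k + 1 => C.prd 0 E (tl C E k)

theorem tail_lemma (C : LieConformalAlgebra L) {E H F : L} (t : C.Triple E H F)
    (b : ℕ → L) (S : ℕ → Submodule ℂ L)
    (hS : ∀ k, ∀ x ∈ S k, ∃ q, x = C.applyP q (b k))
    (hE : ∀ n, C.prd n E E ∈ S 0) (hEx : ∀ k n, ∀ x ∈ S k, C.prd n E x ∈ S (k + 1))
    (hne : ∃ n, C.prd n E E ≠ 0) :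
    C.Tail E H F (C.tl E) ∧ ∀ k, ∃ c : ℂ, c ≠ 0 ∧ C.tl E k ≠ 0 ∧ C.tl E k = c • b k := by
  obtain ⟨h2, h1, hs, hH, hF, c, hc, hcb⟩ :=
    C.EE_lemma t (b 0) (fun n => hS 0 _ (hE n)) hne
  have step : ∀ k z, C.tl E k ≠ 0 → C.tl E k ∈ S k →
      C.Cst H (C.tl E k) ((-((k : ℂ) + 2)) • C.tl E k) →
      C.Cst F (C.tl E k) z → C.Cst E z ((((k : ℂ) + 3) * (k : ℂ) / 2) • C.tl E k) →
      C.Cst E (C.tl E k) (C.tl E (k + 1)) ∧ C.tl E (k + 1) ≠ 0 ∧ C.tl E (k + 1) ∈ S (k + 1) ∧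
      (∃ c : ℂ, c ≠ 0 ∧ C.tl E (k + 1) = c • b (k + 1)) ∧
      C.Cst H (C.tl E (k + 1)) ((-(((k + 1 : ℕ) : ℂ) + 2)) • C.tl E (k + 1)) ∧
      C.Cst F (C.tl E (k + 1)) ((((k : ℂ) + 4) * ((k : ℂ) + 1) / 2) • C.tl E k) := by
    intro k z hw hwS hHw hFw hEz
    have hkc : (((k : ℂ) + 4) * ((k : ℂ) + 1) / 2) ≠ 0 := by
      have a1 : (k : ℂ) + 4 ≠ 0 := by exact_mod_cast (by omega : k + 4 ≠ 0)
      have a2 : (k : ℂ) + 1 ≠ 0 := by exact_mod_cast (by omega : k + 1 ≠ 0)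
      exact div_ne_zero (mul_ne_zero a1 a2) two_ne_zero
    have hFm : ∀ m n, C.prd n F (C.prd (m + 1) E (C.tl E k)) = 0 := by
      intro m n
      rw [t.FE.jac]
      have e1 : C.prd (n + (m + 1)) H (C.tl E k) = 0 := hHw.2 (n + m)
      rw [map_neg, LinearMap.neg_apply, e1]
      rcases n with _ | n
      · rw [hFw.1, hEz.2]; simp
      · rw [hFw.2]; simp
    have hF0 : C.Cst F (C.tl E (k + 1)) ((((k : ℂ) + 4) * ((k : ℂ) + 1) / 2) • C.tl E k) := by
      constructor
      · rw [tl, t.FE.jac, hFw.1, hEz.1, map_neg, LinearMap.neg_apply, add_zero, hHw.1]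
        module
      · intro n
        rw [tl, t.FE.jac, hFw.2, map_neg, LinearMap.neg_apply, add_zero, hHw.2]; simp
    have hmem : ∀ n, C.prd n E (C.tl E k) ∈ S (k + 1) := fun n => hEx k n _ hwS
    obtain ⟨q, hq⟩ := hS (k + 1) (C.tl E (k + 1)) (hmem 0)
    have hz := smul_ne_zero hkc hw
    obtain ⟨c, hc, hcb⟩ := C.const_lemma F (b (k + 1)) _ _ q hq hF0 hz
    refine ⟨⟨rfl, fun m => ?_⟩, ?_, hmem 0, ⟨c, hc, hcb⟩, ?_, hF0⟩
    · obtain ⟨q', hq'⟩ := hS (k + 1) _ (hmem (m + 1))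
      refine C.zero_lemma F (b (k + 1)) _ q' hq' ⟨0, ?_⟩ (hFm m)
      intro h0
      apply hz
      rw [← hF0.1, hcb, map_smul, h0, smul_zero]
    · intro h0
      apply hz
      rw [← hF0.1, h0, map_zero]
    · constructor
      · rw [tl, t.HE.jac, hHw.1, map_neg, LinearMap.neg_apply, add_zero, map_smul]
        push_cast; module
      · intro n
        have hE0 : C.prd (n + 1) E (C.tl E k) = 0 := by
          obtain ⟨q', hq'⟩ := hS (k + 1) _ (hmem (n + 1))
          refine C.zero_lemma F (b (k + 1)) _ q' hq' ⟨0, ?_⟩ (hFm n)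
          intro h0
          apply hz
          rw [← hF0.1, hcb, map_smul, h0, smul_zero]
        rw [tl, t.HE.jac, hHw.2, map_neg, LinearMap.neg_apply, add_zero, hE0]; simp
  have hw0 : C.tl E 0 ≠ 0 := smul_ne_zero (by norm_num) h1
  have hwS0 : C.tl E 0 ∈ S 0 := Submodule.smul_mem _ _ (hE 1)
  have hH0 : C.Cst H (C.tl E 0) ((-(((0 : ℕ) : ℂ) + 2)) • C.tl E 0) := by
    have := hH.smul_right (1 / 2)
    rw [smul_comm] at this
    simpa [tl] using this
  have hF0 : C.Cst F (C.tl E 0) 0 := by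
    have := hF.smul_right (1 / 2)
    simpa [tl] using this
  have hE0 : C.Cst E 0 (((((0 : ℕ) : ℂ) + 3) * ((0 : ℕ) : ℂ) / 2) • C.tl E 0) := by
    rw [show ((((0 : ℕ) : ℂ) + 3) * ((0 : ℕ) : ℂ) / 2) = 0 by simp, zero_smul, Cst.zero_iff]
    simp
  have main : ∀ k, (∃ z, C.tl E k ≠ 0 ∧ C.tl E k ∈ S k ∧
      C.Cst H (C.tl E k) ((-((k : ℂ) + 2)) • C.tl E k) ∧
      C.Cst F (C.tl E k) z ∧ C.Cst E z ((((k : ℂ) + 3) * (k : ℂ) / 2) • C.tl E k)) := by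
    intro k
    induction k with
    | zero => exact ⟨0, hw0, hwS0, hH0, hF0, hE0⟩
    | succ k ih =>
      obtain ⟨z, i1, i2, i3, i4, i5⟩ := ih
      obtain ⟨j1, j2, j3, j4, j5, j6⟩ := step k z i1 i2 i3 i4 i5
      refine ⟨_, j2, j3, j5, j6, ?_⟩
      have := j1.smul_right (((k : ℂ) + 4) * ((k : ℂ) + 1) / 2)
      convert this using 2
      push_cast; ring
  refine ⟨⟨?_, ?_, h2, ?_, ?_, hF0, ?_⟩, ?_⟩
  · rw [tl, map_smul, ← hs]; module
  · rw [tl]; module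
  · intro k
    obtain ⟨z, i1, i2, i3, i4, i5⟩ := main k
    exact (step k z i1 i2 i3 i4 i5).1
  · intro k
    obtain ⟨z, i1, i2, i3, i4, i5⟩ := main k
    exact i3
  · intro k
    obtain ⟨z, i1, i2, i3, i4, i5⟩ := main k
    exact (step k z i1 i2 i3 i4 i5).2.2.2.2.2
  · intro k
    rcases k with _ | k
    · refine ⟨1 / 2 * c, mul_ne_zero (by norm_num) hc, hw0, ?_⟩
      rw [tl, hcb, smul_smul]
    · obtain ⟨z, i1, i2, i3, i4, i5⟩ := main k
      obtain ⟨j1, j2, j3, ⟨c', hc', hcb'⟩, -⟩ := step k z i1 i2 i3 i4 i5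
      exact ⟨c', hc', j2, hcb'⟩

theorem Tail.w0z {C : LieConformalAlgebra L} {E H F : L} {w : ℕ → L} (t : C.Tail E H F w)
    (z z' z'' : L) (h : C.Cst E z z') (h' : C.Cst E z' z'') : C.Cst (w 0) z 0 := by
  rw [Cst.zero_iff]
  intro k
  have := C.jacobi (k + 1) 0 E E z
  rw [h.1, h.2, h'.2, map_zero, Finset.sum_range_succ', Finset.sum_range_succ',
    Finset.sum_eq_zero (fun j _ => by rw [t.EEn]; simp)] at this
  simp only [zero_add, t.EE1, t.EE0, C.sesq] at this
  simp only [sub_self, Nat.choose_one_right, add_zero, Nat.add_sub_cancel, map_smul,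
    LinearMap.smul_apply, Nat.choose_zero_right, Nat.sub_zero, Nat.cast_one, one_smul] at this
  have h3 : ((k + 1 : ℕ) : ℂ) • C.prd k (w 0) z = 0 := by
    rw [this]; module
  exact (smul_eq_zero.1 h3).resolve_left (Nat.cast_ne_zero.2 (by omega))

theorem Tail.ww {C : LieConformalAlgebra L} {E H F : L} {w : ℕ → L} (t : C.Tail E H F w)
    (i j : ℕ) : C.Cst (w i) (w j) 0 := by
  induction i generalizing j with
  | zero => exact t.w0z _ _ _ (t.Ew j) (t.Ew (j + 1))
  | succ i ih =>
    rw [Cst.zero_iff]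
    intro n
    rw [← (t.Ew i).1, C.jac0, (t.Ew j).1, Cst.zero_iff.1 (ih j), Cst.zero_iff.1 (ih (j + 1))]
    simp

theorem Tail.ww' {C : LieConformalAlgebra L} {E H F : L} {w w' : ℕ → L} (t : C.Tail E H F w)
    (t' : C.Tail F (-H) E w') (i j : ℕ) : C.Cst (w i) (w' j) 0 := by
  have z0 : C.Cst E 0 0 := by rw [Cst.zero_iff]; simp
  induction i generalizing j with
  | zero =>
    rcases j with _ | _ | j
    · exact t.w0z _ _ _ t'.Fw0 z0
    · exact t.w0z _ _ _ (t'.Fws 0) (t'.Fw0.smul_right _)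
    · exact t.w0z _ _ _ (t'.Fws (j + 1)) ((t'.Fws j).smul_right _)
  | succ i ih =>
    rw [Cst.zero_iff]
    intro n
    rw [← (t.Ew i).1, C.jac0, Cst.zero_iff.1 (ih j)]
    rcases j with _ | j
    · rw [t'.Fw0.1]; simp
    · rw [(t'.Fws j).1, map_smul, Cst.zero_iff.1 (ih j)]; simp

/-- the `ℂ[∂]`-span -/
def dspan (C : LieConformalAlgebra L) {ι : Type} (v : ι → L) : Submodule ℂ L :=
  Submodule.span ℂ (Set.range fun q : ι × ℕ => (⇑C.D)^[q.2] (v q.1))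

theorem dspan_mem (C : LieConformalAlgebra L) {ι : Type} (v : ι → L) (i : ι) :
    v i ∈ C.dspan v := Submodule.subset_span ⟨(i, 0), rfl⟩

theorem dspan_D (C : LieConformalAlgebra L) {ι : Type} (v : ι → L) (x : L) (hx : x ∈ C.dspan v) :
    C.D x ∈ C.dspan v := by
  induction hx using Submodule.span_induction with
  | mem x hx =>
    obtain ⟨q, rfl⟩ := hx
    refine Submodule.subset_span ⟨(q.1, q.2 + 1), ?_⟩
    simp only [Function.iterate_succ_apply']
  | zero => simp
  | add x y _ _ hx hy => rw [map_add]; exact add_mem hx hy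
  | smul c x _ hx => rw [map_smul]; exact Submodule.smul_mem _ _ hx

theorem dspan_prd (C : LieConformalAlgebra L) {ι : Type} (v : ι → L)
    (h : ∀ i j n, C.prd n (v i) (v j) ∈ C.dspan v) (n : ℕ) (x : L) (hx : x ∈ C.dspan v)
    (y : L) (hy : y ∈ C.dspan v) : C.prd n x y ∈ C.dspan v := by
  have h1 : ∀ i k n, ∀ j, C.prd n ((⇑C.D)^[k] (v i)) (v j) ∈ C.dspan v := by
    intro i k
    induction k with
    | zero => intro n j; exact h i j n
    | succ k ih =>
      intro n j
      rw [Function.iterate_succ_apply', C.sesq]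
      exact Submodule.smul_mem _ _ (ih _ _)
  have h2 : ∀ i k l n, ∀ j, C.prd n ((⇑C.D)^[k] (v i)) ((⇑C.D)^[l] (v j)) ∈ C.dspan v := by
    intro i k l
    induction l with
    | zero => intro n j; exact h1 i k n j
    | succ l ih =>
      intro n j
      rw [Function.iterate_succ_apply', C.sesq']
      exact add_mem (C.dspan_D v _ (ih _ _)) (Submodule.smul_mem _ _ (ih _ _))
  induction hx using Submodule.span_induction with
  | mem x hx =>
    obtain ⟨q, rfl⟩ := hx
    induction hy using Submodule.span_induction with
    | mem y hy => obtain ⟨r, rfl⟩ := hy; exact h2 _ _ _ _ _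
    | zero => simp
    | add x y _ _ hx hy => rw [map_add]; exact add_mem hx hy
    | smul c x _ hx => rw [map_smul]; exact Submodule.smul_mem _ _ hx
  | zero => simp
  | add x y _ _ hx hy => rw [map_add]; exact add_mem hx hy
  | smul c x _ hx => rw [map_smul]; exact Submodule.smul_mem _ _ hx

end LieConformalAlgebra

theorem ClassV.freeBasis {L : Type} [AddCommGroup L] [Module ℂ L] (C : ClassV L) {ι : Type}
    (idx : ι → ℤ) (hinj : Function.Injective idx) (v : ι → L)
    (hv : ∀ i, ∃ c : ℂ, c ≠ 0 ∧ v i ≠ 0 ∧ v i = c • C.bas (idx i))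
    (i1 : ∃ i, idx i = 1) (i0 : ∃ i, idx i = 0) (im : ∃ i, idx i = -1)
    (hcl : ∀ i j n, C.prd n (v i) (v j) ∈ C.dspan v) :
    C.toLieConformalAlgebra.IsFreePolyBasis v := by
  choose c hc hv0 hvc using hv
  have hG : ∀ i, C.G (idx i) ≠ ⊥ := by
    intro i h
    apply hv0 i
    rw [hvc, C.bas_zero _ h, smul_zero]
  have hDc : ∀ k i, (⇑C.D)^[k] (v i) = c i • (⇑C.D)^[k] (C.bas (idx i)) := by
    intro k i
    rw [hvc, ← Module.End.pow_apply, ← Module.End.pow_apply, map_smul]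
  have hmem : ∀ k i, (⇑C.D)^[k] (v i) ∈ C.G (idx i) := by
    intro k i
    rw [hDc, C.bas_span _ (hG i)]
    exact Submodule.smul_mem _ _ (Submodule.subset_span ⟨k, rfl⟩)
  constructor
  · let _ := C.internal.chooseDecomposition
    rw [linearIndependent_iff']
    rintro s g hg ⟨i, k⟩ hik
    have h1 : ∑ q ∈ s.filter (fun q => q.1 = i), g q • (⇑C.D)^[q.2] (v q.1) = 0 := by
      have := congrArg (fun x => ((DirectSum.decompose C.G x (idx i) : C.G (idx i)) : L)) hg
      simp only [DirectSum.decompose_sum, DirectSum.decompose_zero, DirectSum.zero_apply,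
        ZeroMemClass.coe_zero] at this
      rw [← this, DirectSum.sum_apply, AddSubmonoidClass.coe_finsetSum, Finset.sum_filter]
      refine Finset.sum_congr rfl fun q _ => ?_
      split_ifs with h
      · rw [← h, DirectSum.decompose_of_mem_same]
        exact Submodule.smul_mem _ _ (hmem _ _)
      · exact (DirectSum.decompose_of_mem_ne C.G (Submodule.smul_mem _ _ (hmem _ _))
          (fun h' => h (hinj h'))).symm
    have h2 : ∑ k ∈ (s.filter (fun q => q.1 = i)).image Prod.snd,
        (g (i, k) * c i) • (⇑C.D)^[k] (C.bas (idx i)) = 0 := by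
      rw [← h1, Finset.sum_image]
      · refine Finset.sum_congr rfl fun q hq => ?_
        obtain ⟨q1, q2⟩ := q
        have : q1 = i := (Finset.mem_filter.1 hq).2
        subst this
        rw [hDc, smul_smul]
      · rintro ⟨a, b⟩ ha ⟨a', b'⟩ ha' hb
        have e1 : a = i := (Finset.mem_filter.1 ha).2
        have e2 : a' = i := (Finset.mem_filter.1 ha').2
        simp only at hb
        rw [e1, e2, hb]
    have h3 := linearIndependent_iff'.1 (C.bas_indep _ (hG i)) _ _ h2 k
      (Finset.mem_image.2 ⟨(i, k), Finset.mem_filter.2 ⟨hik, rfl⟩, rfl⟩)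
    exact (mul_eq_zero.1 h3).resolve_right (hc i)
  · have hle : ∀ j, (∃ i, idx i = j) → C.G j ≤ C.dspan v := by
      rintro _ ⟨i, rfl⟩
      rw [C.bas_span _ (hG i), Submodule.span_le]
      rintro _ ⟨k, rfl⟩
      have : (⇑C.D)^[k] (C.bas (idx i)) = (c i)⁻¹ • (⇑C.D)^[k] (v i) := by
        rw [hDc, smul_smul, inv_mul_cancel₀ (hc i), one_smul]
      simp only [this]
      exact Submodule.smul_mem _ _ (Submodule.subset_span ⟨(i, k), rfl⟩)
    exact C.genV (C.dspan v) (C.dspan_D v)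
      (fun n a ha b hb => C.dspan_prd v hcl n a ha b hb) (hle 1 i1) (hle 0 i0) (hle (-1) im)

namespace LieConformalAlgebra

variable {L : Type} [AddCommGroup L] [Module ℂ L]

theorem bracketEq_Pc {C : LieConformalAlgebra L} {a b t : L} {c : ℂ} :
    C.BracketEq a b t (Pc c) ↔ C.Cst a b (c • t) := by
  constructor
  · intro h
    constructor
    · rw [h 0]; simp [Pc, applyP]
    · intro n
      rw [h (n + 1)]; simp [Pc, applyP, Polynomial.coeff_C]
  · intro h n
    rcases n with _ | n
    · rw [h.1]; simp [Pc, applyP]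
    · rw [h.2]; simp [Pc, applyP, Polynomial.coeff_C]

theorem bracketEq_EE {C : LieConformalAlgebra L} {a b t : L} (h0 : C.prd 0 a b = C.D t)
    (h1 : C.prd 1 a b = (2 : ℂ) • t) (h2 : ∀ n, C.prd (n + 2) a b = 0) :
    C.BracketEq a b t (Pd + Pc 2 * Pl) := by
  intro n
  rcases n with _ | _ | n
  · rw [h0]; simp [Pd, Pc, Pl, applyP]
  · rw [zero_add, h1]
    have : (Pd + Pc 2 * Pl).coeff 1 = Polynomial.C 2 := by
      simp [Pd, Pc, Pl, Polynomial.coeff_C]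
    rw [this]; simp [applyP]
  · rw [h2]
    have : (Pd + Pc 2 * Pl).coeff (n + 2) = 0 := by
      simp [Pd, Pc, Pl, Polynomial.coeff_C, Polynomial.coeff_X]
    rw [this]; simp [applyP]

theorem applyP_mem (C : LieConformalAlgebra L) {ι : Type} (v : ι → L) (q : ℂ[X]) (x : L)
    (hx : x ∈ C.dspan v) : C.applyP q x ∈ C.dspan v := by
  rw [applyP_range]
  refine sum_mem fun k hk => Submodule.smul_mem _ _ ?_
  clear hk
  induction k with
  | zero => exact hx
  | succ k ih => rw [Function.iterate_succ_apply']; exact C.dspan_D v _ ih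

theorem BracketEq.mem {C : LieConformalAlgebra L} {a b t : L} {p} (h : C.BracketEq a b t p)
    {ι : Type} (v : ι → L) (ht : t ∈ C.dspan v) (n : ℕ) : C.prd n a b ∈ C.dspan v := by
  rw [h n]; exact Submodule.smul_mem _ _ (C.applyP_mem v _ _ ht)

/-- scalar coefficients of `M(2)` -/
def cM (i j : ℤ) : ℂ :=
  if i = 0 then (-(j : ℂ))
  else if j = 0 then (i : ℂ)
  else if i = -1 ∧ 1 ≤ j then (((j : ℂ) + 1) * ((j : ℂ) - 2) / 2)
  else if j = -1 ∧ 1 ≤ i then (-(((i : ℂ) + 1) * ((i : ℂ) - 2) / 2))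
  else if i = 1 ∧ j ≤ -2 then (((j : ℂ) - 1) * ((j : ℂ) + 2) / 2)
  else if j = 1 ∧ i ≤ -2 then (-(((i : ℂ) - 1) * ((i : ℂ) + 2) / 2))
  else if i = -1 ∧ j ≤ -2 then 1
  else if j = -1 ∧ i ≤ -2 then -1
  else if i = 1 ∧ 2 ≤ j then 1
  else if j = 1 ∧ 2 ≤ i then -1
  else 0

theorem pM2_eq (i j : ℤ) (h1 : ¬ (i = 1 ∧ j = 1)) (h2 : ¬ (i = -1 ∧ j = -1)) :
    pM2 i j = Pc (cM i j) := by
  unfold pM2 cM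
  rw [if_neg h1, if_neg h2]
  have e1 : Pc 1 = 1 := by simp [Pc]
  have e2 : Pc (-1) = -1 := by simp [Pc]
  have e3 : Pc 0 = 0 := by simp [Pc]
  simp only [apply_ite Pc, e1, e2, e3]

theorem pM1_eq (i j : ℤ) (h1 : ¬ (i = 1 ∧ j = 1)) (hi : -1 ≤ i) (hj : -1 ≤ j) :
    pM1 i j = Pc (cM i j) := by
  unfold pM1 cM
  rw [if_neg h1]
  split_ifs <;> first | (exfalso; omega) | simp [Pc]

theorem cM_anti (i j : ℤ) : cM j i = - cM i j := by
  unfold cM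
  split_ifs <;> first | (exfalso; omega) | (simp; done) | (subst_vars; simp)

theorem cM_1p (k : ℕ) : cM 1 ((k : ℤ) + 2) = 1 := by
  rw [cM, if_neg (by omega), if_neg (by omega), if_neg (by omega), if_neg (by omega),
    if_neg (by omega), if_neg (by omega), if_neg (by omega), if_neg (by omega),
    if_pos (by omega)]

theorem cM_mp (k : ℕ) : cM (-1) ((k : ℤ) + 2) = ((k : ℂ) + 3) * (k : ℂ) / 2 := by
  rw [cM, if_neg (by omega), if_neg (by omega), if_pos (by omega)]
  push_cast; ring

theorem cM_pp (k l : ℕ) : cM ((k : ℤ) + 2) ((l : ℤ) + 2) = 0 := by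
  rw [cM, if_neg (by omega), if_neg (by omega), if_neg (by omega), if_neg (by omega),
    if_neg (by omega), if_neg (by omega), if_neg (by omega), if_neg (by omega),
    if_neg (by omega), if_neg (by omega)]

theorem cM_mm (k : ℕ) : cM (-1) (-((k : ℤ) + 2)) = 1 := by
  rw [cM, if_neg (by omega), if_neg (by omega), if_neg (by omega), if_neg (by omega),
    if_neg (by omega), if_neg (by omega), if_pos (by omega)]

theorem cM_1m (k : ℕ) : cM 1 (-((k : ℤ) + 2)) = ((k : ℂ) + 3) * (k : ℂ) / 2 := by
  rw [cM, if_neg (by omega), if_neg (by omega), if_neg (by omega), if_neg (by omega),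
    if_pos (by omega)]
  push_cast; ring

theorem cM_nn (k l : ℕ) : cM (-((k : ℤ) + 2)) (-((l : ℤ) + 2)) = 0 := by
  rw [cM, if_neg (by omega), if_neg (by omega), if_neg (by omega), if_neg (by omega),
    if_neg (by omega), if_neg (by omega), if_neg (by omega), if_neg (by omega),
    if_neg (by omega), if_neg (by omega)]

theorem cM_pn (k l : ℕ) : cM ((k : ℤ) + 2) (-((l : ℤ) + 2)) = 0 := by
  rw [cM, if_neg (by omega), if_neg (by omega), if_neg (by omega), if_neg (by omega),
    if_neg (by omega), if_neg (by omega), if_neg (by omega), if_neg (by omega),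
    if_neg (by omega), if_neg (by omega)]

theorem int_cases (i : ℤ) : i = 0 ∨ i = 1 ∨ i = -1 ∨ (∃ k : ℕ, i = (k : ℤ) + 2) ∨
    ∃ k : ℕ, i = -((k : ℤ) + 2) := by
  by_cases h : 2 ≤ i
  · right; right; right; left; exact ⟨(i - 2).toNat, by omega⟩
  by_cases h' : i ≤ -2
  · right; right; right; right; exact ⟨(-i - 2).toNat, by omega⟩
  omega

/-- the basis -/
def vM (E H F : L) (w w' : ℕ → L) (i : ℤ) : L :=
  if i = 0 then H else if i = 1 then E else if i = -1 then F
  else if 2 ≤ i then w (i - 2).toNat else w' (-i - 2).toNat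

section
variable (E H F : L) (w w' : ℕ → L)

theorem vM_0 : vM E H F w w' 0 = H := by simp [vM]
theorem vM_1 : vM E H F w w' 1 = E := by simp [vM]
theorem vM_m1 : vM E H F w w' (-1) = F := by simp [vM]
theorem vM_p (k : ℕ) : vM E H F w w' ((k : ℤ) + 2) = w k := by
  unfold vM
  rw [if_neg (by omega), if_neg (by omega), if_neg (by omega), if_pos (by omega)]
  simp
theorem vM_m (k : ℕ) : vM E H F w w' (-((k : ℤ) + 2)) = w' k := by
  unfold vM
  rw [if_neg (by omega), if_neg (by omega), if_neg (by omega), if_neg (by omega)]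
  simp

end

/-- table entry -/
def TT (C : LieConformalAlgebra L) (v : ℤ → L) (i j : ℤ) : Prop :=
  C.Cst (v i) (v j) (cM i j • v (i + j))

theorem TT.symm {C : LieConformalAlgebra L} {v : ℤ → L} {i j : ℤ} (h : C.TT v i j) :
    C.TT v j i := by
  have := Cst.symm h
  rw [TT, cM_anti, neg_smul, add_comm]
  exact this

theorem TT.mk' {C : LieConformalAlgebra L} {v : ℤ → L} {i j : ℤ} {a b x t : L} (c : ℂ)
    (h : C.Cst a b x) (ha : v i = a) (hb : v j = b) (hc : cM i j = c) (ht : c ≠ 0 → v (i + j) = t)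
    (hx : x = c • t) : C.TT v i j := by
  rw [TT, ha, hb, hc]
  by_cases h0 : c = 0
  · rw [h0, zero_smul]; rw [hx, h0, zero_smul] at h; exact h
  · rw [ht h0, ← hx]; exact h

theorem table_pos {C : LieConformalAlgebra L} {E H F : L} {w : ℕ → L} (t : C.Triple E H F)
    (T : C.Tail E H F w) (w' : ℕ → L) (i j : ℤ) (hi : -1 ≤ i) (hj : -1 ≤ j)
    (h1 : ¬ (i = 1 ∧ j = 1)) (h2 : ¬ (i = -1 ∧ j = -1)) :
    C.TT (vM E H F w w') i j := by
  have c00 : C.TT (vM E H F w w') 0 0 :=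
    TT.mk' (t := H) 0 t.HH (vM_0 ..) (vM_0 ..) (by simp [cM]) (by simp) (by simp)
  have c01 : C.TT (vM E H F w w') 0 1 :=
    TT.mk' (t := E) (-1) t.HE (vM_0 ..) (vM_1 ..) (by simp [cM])
      (fun _ => by simpa using vM_1 ..) (by simp)
  have c0m : C.TT (vM E H F w w') 0 (-1) :=
    TT.mk' (t := F) 1 t.HF (vM_0 ..) (vM_m1 ..) (by simp [cM])
      (fun _ => by simpa using vM_m1 ..) (by simp)
  have cm1 : C.TT (vM E H F w w') (-1) 1 :=
    TT.mk' (t := H) (-1) t.FE (vM_m1 ..) (vM_1 ..) (by norm_num [cM])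
      (fun _ => by simpa using vM_0 ..) (by simp)
  have c0k : ∀ k : ℕ, C.TT (vM E H F w w') 0 ((k : ℤ) + 2) := fun k =>
    TT.mk' (t := w k) (-((k : ℂ) + 2)) (T.Hw k) (vM_0 ..) (vM_p ..) (by simp [cM])
      (fun _ => by rw [zero_add]; exact vM_p ..) rfl
  have c1k : ∀ k : ℕ, C.TT (vM E H F w w') 1 ((k : ℤ) + 2) := fun k =>
    TT.mk' (t := w (k + 1)) 1 (T.Ew k) (vM_1 ..) (vM_p ..)
      (cM_1p k)
      (fun _ => by rw [← vM_p E H F w w' (k + 1)]; congr 1; push_cast; ring) (by simp)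
  have cmk : ∀ k : ℕ, C.TT (vM E H F w w') (-1) ((k : ℤ) + 2) := by
    intro k
    rcases k with _ | k
    · exact TT.mk' (t := 0) 0 T.Fw0 (vM_m1 ..) (vM_p ..)
        ((cM_mp 0).trans (by push_cast; ring)) (by simp)
        (by simp)
    · exact TT.mk' (t := w k) _ (T.Fws k) (vM_m1 ..) (vM_p ..)
        ((cM_mp (k + 1)).trans (by push_cast; ring))
        (fun _ => by rw [← vM_p E H F w w' k]; congr 1; push_cast; ring) rfl
  have ckl : ∀ k l : ℕ, C.TT (vM E H F w w') ((k : ℤ) + 2) ((l : ℤ) + 2) := fun k l =>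
    TT.mk' (t := 0) 0 (T.ww k l) (vM_p ..) (vM_p ..)
      (cM_pp k l) (by simp) (by simp)
  rcases int_cases i with rfl | rfl | rfl | ⟨k, rfl⟩ | ⟨k, rfl⟩
  · rcases int_cases j with rfl | rfl | rfl | ⟨l, rfl⟩ | ⟨l, rfl⟩
    exacts [c00, c01, c0m, c0k l, by omega]
  · rcases int_cases j with rfl | rfl | rfl | ⟨l, rfl⟩ | ⟨l, rfl⟩
    exacts [c01.symm, by omega, cm1.symm, c1k l, by omega]
  · rcases int_cases j with rfl | rfl | rfl | ⟨l, rfl⟩ | ⟨l, rfl⟩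
    exacts [c0m.symm, cm1, by omega, cmk l, by omega]
  · rcases int_cases j with rfl | rfl | rfl | ⟨l, rfl⟩ | ⟨l, rfl⟩
    exacts [(c0k k).symm, (c1k k).symm, (cmk k).symm, ckl k l, by omega]
  · omega

theorem table_all {C : LieConformalAlgebra L} {E H F : L} {w w' : ℕ → L} (t : C.Triple E H F)
    (T : C.Tail E H F w) (T' : C.Tail F (-H) E w') (i j : ℤ)
    (h1 : ¬ (i = 1 ∧ j = 1)) (h2 : ¬ (i = -1 ∧ j = -1)) :
    C.TT (vM E H F w w') i j := by
  have c0k : ∀ k : ℕ, C.TT (vM E H F w w') 0 (-((k : ℤ) + 2)) := fun k =>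
    TT.mk' (t := w' k) ((k : ℂ) + 2) (by simpa using (T'.Hw k).neg_left) (vM_0 ..) (vM_m ..)
      (by simp [cM])
      (fun _ => by rw [zero_add]; exact vM_m ..) (by module)
  have cmk : ∀ k : ℕ, C.TT (vM E H F w w') (-1) (-((k : ℤ) + 2)) := fun k =>
    TT.mk' (t := w' (k + 1)) 1 (T'.Ew k) (vM_m1 ..) (vM_m ..)
      (cM_mm k)
      (fun _ => by rw [← vM_m E H F w w' (k + 1)]; congr 1; push_cast; ring) (by simp)
  have c1k : ∀ k : ℕ, C.TT (vM E H F w w') 1 (-((k : ℤ) + 2)) := by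
    intro k
    rcases k with _ | k
    · exact TT.mk' (t := 0) 0 T'.Fw0 (vM_1 ..) (vM_m ..)
        ((cM_1m 0).trans (by push_cast; ring)) (by simp)
        (by simp)
    · exact TT.mk' (t := w' k) _ (T'.Fws k) (vM_1 ..) (vM_m ..)
        ((cM_1m (k + 1)).trans (by push_cast; ring))
        (fun _ => by rw [← vM_m E H F w w' k]; congr 1) rfl
  have ckl : ∀ k l : ℕ, C.TT (vM E H F w w') (-((k : ℤ) + 2)) (-((l : ℤ) + 2)) := fun k l =>
    TT.mk' (t := 0) 0 (T'.ww k l) (vM_m ..) (vM_m ..)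
      (cM_nn k l) (by simp) (by simp)
  have cpl : ∀ k l : ℕ, C.TT (vM E H F w w') ((k : ℤ) + 2) (-((l : ℤ) + 2)) := fun k l =>
    TT.mk' (t := 0) 0 (T.ww' T' k l) (vM_p ..) (vM_m ..)
      (cM_pn k l) (by simp) (by simp)
  by_cases hi : -1 ≤ i
  · by_cases hj : -1 ≤ j
    · exact table_pos t T w' i j hi hj h1 h2
    · obtain ⟨l, rfl⟩ : ∃ l : ℕ, j = -((l : ℤ) + 2) := ⟨(-j - 2).toNat, by omega⟩
      rcases int_cases i with rfl | rfl | rfl | ⟨k, rfl⟩ | ⟨k, rfl⟩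
      exacts [c0k l, c1k l, cmk l, cpl k l, ckl k l]
  · obtain ⟨l, rfl⟩ : ∃ l : ℕ, i = -((l : ℤ) + 2) := ⟨(-i - 2).toNat, by omega⟩
    rcases int_cases j with rfl | rfl | rfl | ⟨k, rfl⟩ | ⟨k, rfl⟩
    exacts [(c0k l).symm, (c1k l).symm, (cmk l).symm, (cpl k l).symm, ckl l k]

end LieConformalAlgebra

/-- nonzero scalar multiple -/
def Prp {L : Type} [AddCommGroup L] [Module ℂ L] (x y : L) : Prop :=
  ∃ c : ℂ, c ≠ 0 ∧ x ≠ 0 ∧ x = c • y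

namespace ClassV

variable {L : Type} [AddCommGroup L] [Module ℂ L] (C : ClassV L)

theorem gen_applyP (i : ℤ) (x : L) (hx : x ∈ C.G i) : ∃ q, x = C.applyP q (C.bas i) := by
  by_cases h : C.G i = ⊥
  · rw [h, Submodule.mem_bot] at hx
    exact ⟨0, by rw [hx]; simp [LieConformalAlgebra.applyP]⟩
  · rw [C.bas_span i h] at hx
    induction hx using Submodule.span_induction with
    | mem x hx =>
      obtain ⟨k, rfl⟩ := hx
      exact ⟨Polynomial.monomial k 1, by simp [LieConformalAlgebra.applyP]⟩
    | zero => exact ⟨0, by simp [LieConformalAlgebra.applyP]⟩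
    | add x y _ _ hx hy =>
      obtain ⟨p, rfl⟩ := hx
      obtain ⟨q, rfl⟩ := hy
      refine ⟨p + q, ?_⟩
      rw [LieConformalAlgebra.applyP, LieConformalAlgebra.applyP, LieConformalAlgebra.applyP,
        Polynomial.sum_add_index]
      · simp
      · intro _ _ _; rw [add_smul]
    | smul c x _ hx =>
      obtain ⟨p, rfl⟩ := hx
      refine ⟨c • p, ?_⟩
      rw [LieConformalAlgebra.applyP, LieConformalAlgebra.applyP,
        Polynomial.sum_smul_index]
      · simp [Polynomial.sum, Finset.smul_sum, mul_smul]
      · simp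

theorem bas_ne (i : ℤ) (h : C.G i ≠ ⊥) : C.bas i ≠ 0 := by
  have := (C.bas_indep i h).ne_zero 0
  simpa using this

theorem applyP_inj (i : ℤ) (h : C.G i ≠ ⊥) (q : ℂ[X]) (hq : C.applyP q (C.bas i) = 0) :
    q = 0 := by
  rw [LieConformalAlgebra.applyP_range] at hq
  have := linearIndependent_iff'.1 (C.bas_indep i h) _ _ hq
  ext k
  by_cases hk : k < q.natDegree + 1
  · exact this k (Finset.mem_range.2 hk)
  · rw [Polynomial.coeff_eq_zero_of_natDegree_lt (by omega)]; simp

theorem exists_triple (h₁ : ∃ a : ℂ, a ≠ 0 ∧ C.sp (-1) 1 = Pc a)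
    (h₀ : ∃ a : ℂ, a ≠ 0 ∧ C.sp 0 1 = Pc a) :
    ∃ H F : L, C.Triple (C.bas 1) H F ∧ Prp H (C.bas 0) ∧ Prp F (C.bas (-1)) := by
  obtain ⟨a, ha, h₁⟩ := h₁
  obtain ⟨b, hb, h₀⟩ := h₀
  have PE : C.Cst (C.bas (-1)) (C.bas 1) (a • C.bas 0) := by
    rw [← LieConformalAlgebra.bracketEq_Pc, ← h₁]
    exact C.sp_brkt (-1) 1
  have ZE : C.Cst (C.bas 0) (C.bas 1) (b • C.bas 1) := by
    rw [← LieConformalAlgebra.bracketEq_Pc, ← h₀]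
    exact C.sp_brkt 0 1
  have ZZ : C.Cst (C.bas 0) (C.bas 0) 0 := by
    rw [LieConformalAlgebra.Cst.zero_iff]
    intro n; exact C.abelian0 n _ (C.bas_mem 0) _ (C.bas_mem 0)
  have EZ := ZE.symm
  have EP := PE.symm
  have hZ := C.bas_ne 0 C.supp_zero
  have hP := C.bas_ne (-1) C.supp_negone
  have key : ∀ m n, C.prd n (C.bas 1) (C.prd m (C.bas (-1)) (C.bas 0)) =
      C.prd m (C.bas (-1)) (C.prd n (C.bas 1) (C.bas 0)) := by
    intro m n
    rw [PE.jac, map_smul, LinearMap.smul_apply, LieConformalAlgebra.Cst.zero_iff.1 ZZ]; simp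
  have hu0 : C.Cst (C.bas 1) (C.prd 0 (C.bas (-1)) (C.bas 0)) (-(b • a • C.bas 0)) := by
    constructor
    · rw [key, EZ.1, map_neg, map_smul, PE.1]
    · intro n; rw [key, EZ.2, map_zero]
  have hum : ∀ m n, C.prd n (C.bas 1) (C.prd (m + 1) (C.bas (-1)) (C.bas 0)) = 0 := by
    intro m n
    rw [key]
    rcases n with _ | n
    · rw [EZ.1, map_neg, map_smul, PE.2]; simp
    · rw [EZ.2, map_zero]
  have hmem : ∀ m, C.prd m (C.bas (-1)) (C.bas 0) ∈ C.G (-1) := by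
    intro m
    simpa using C.prdGrade (-1) 0 m _ (C.bas_mem (-1)) _ (C.bas_mem 0)
  have hu1 : ∀ m, C.prd (m + 1) (C.bas (-1)) (C.bas 0) = 0 := by
    intro m
    obtain ⟨q, hq⟩ := C.gen_applyP _ _ (hmem (m + 1))
    refine C.zero_lemma _ _ _ q hq ⟨0, ?_⟩ (hum m)
    rw [EP.1]
    exact neg_ne_zero.2 (smul_ne_zero ha hZ)
  have hu : C.prd 0 (C.bas (-1)) (C.bas 0) = b • C.bas (-1) := by
    obtain ⟨q, hq⟩ := C.gen_applyP _ _ (hmem 0)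
    obtain ⟨c, hc, hcb⟩ := C.const_lemma _ _ _ _ q hq hu0
      (neg_ne_zero.2 (smul_ne_zero hb (smul_ne_zero ha hZ)))
    have h3 := hu0.1
    rw [hcb, map_smul, EP.1, smul_neg, neg_inj, smul_smul, smul_smul] at h3
    have h4 := smul_left_injective ℂ hZ h3
    rw [hcb, mul_right_cancel₀ ha h4]
  have PZ : C.Cst (C.bas (-1)) (C.bas 0) (b • C.bas (-1)) := ⟨hu, hu1⟩
  have ZP := PZ.symm
  refine ⟨(-b⁻¹) • C.bas 0, (a⁻¹ * b⁻¹) • C.bas (-1), ⟨?_, ?_, ?_, ?_⟩, ?_, ?_⟩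
  · have := ZE.smul_left (-b⁻¹)
    convert this using 1
    rw [smul_smul, neg_mul, inv_mul_cancel₀ hb, neg_smul, one_smul]
  · have := (ZP.smul_left (-b⁻¹)).smul_right (a⁻¹ * b⁻¹)
    convert this using 1
    rw [neg_smul, smul_neg b⁻¹, neg_neg, smul_smul b⁻¹, inv_mul_cancel₀ hb, one_smul]
  · have := PE.smul_left (a⁻¹ * b⁻¹)
    convert this using 1
    rw [neg_smul, neg_neg, smul_smul]
    congr 1
    field_simp
  · have := (ZZ.smul_left (-b⁻¹)).smul_right (-b⁻¹)
    simpa using this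
  · have : -b⁻¹ ≠ 0 := neg_ne_zero.2 (inv_ne_zero hb)
    exact ⟨_, this, smul_ne_zero this hZ, rfl⟩
  · have : a⁻¹ * b⁻¹ ≠ 0 := mul_ne_zero (inv_ne_zero ha) (inv_ne_zero hb)
    exact ⟨_, this, smul_ne_zero this hP, rfl⟩

theorem sp_ne (i : ℤ) (h : C.sp i i ≠ 0) (x : L) (hx : Prp x (C.bas i)) :
    ∃ n, C.prd n x x ≠ 0 := by
  by_contra! hh
  apply h
  obtain ⟨c, hc, -, rfl⟩ := hx
  have hG : C.G (i + i) ≠ ⊥ := fun hG => h (C.sp_zero i i (Or.inr (Or.inr hG)))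
  ext1 n
  rw [Polynomial.coeff_zero]
  apply C.applyP_inj (i + i) hG
  have h1 := hh n
  rw [map_smul, map_smul, LinearMap.smul_apply, C.sp_brkt] at h1
  have h2 := ((smul_eq_zero.1 ((smul_eq_zero.1 h1).resolve_left hc)).resolve_left hc)
  exact (smul_eq_zero.1 h2).resolve_left (Nat.cast_ne_zero.2 (Nat.factorial_ne_zero n))

theorem sp_eq (i : ℤ) (h : C.sp i i = 0) (x : L) (hx : Prp x (C.bas i)) :
    C.Cst x x 0 := by
  rw [LieConformalAlgebra.Cst.zero_iff]
  obtain ⟨c, hc, -, rfl⟩ := hx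
  intro n
  rw [map_smul, map_smul, LinearMap.smul_apply, C.sp_brkt, h]
  simp

theorem exists_tail (ε : ℤ) (E H F : L) (t : C.Triple E H F) (hE : Prp E (C.bas ε))
    (h : C.sp ε ε ≠ 0) :
    ∃ w : ℕ → L, C.Tail E H F w ∧ ∀ k : ℕ, Prp (w k) (C.bas (ε * ((k : ℤ) + 2))) := by
  have hEm : E ∈ C.G ε := by
    obtain ⟨c, hc, -, rfl⟩ := hE
    exact Submodule.smul_mem _ _ (C.bas_mem ε)
  have := C.tail_lemma t (fun k => C.bas (ε * ((k : ℤ) + 2))) (fun k => C.G (ε * ((k : ℤ) + 2)))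
    (fun k x hx => C.gen_applyP _ x hx)
    (fun n => by
      have := C.prdGrade ε ε n _ hEm _ hEm
      convert this using 2
      push_cast; ring)
    (fun k n x hx => by
      have := C.prdGrade ε _ n _ hEm _ hx
      convert this using 2
      push_cast; ring) (C.sp_ne ε h E hE)
  exact ⟨_, this.1, this.2⟩

open LieConformalAlgebra in
theorem isM1 (ε : ℤ) (hε : ε = 1 ∨ ε = -1) (E H F : L) (t : C.Triple E H F)
    (hE : Prp E (C.bas ε)) (hH : Prp H (C.bas 0)) (hF : Prp F (C.bas (-ε)))
    (h : C.sp ε ε ≠ 0) (h' : C.sp (-ε) (-ε) = 0) : C.IsM1 := by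
  obtain ⟨w, T, hw⟩ := C.exists_tail ε E H F t hE h
  have hFF := C.sp_eq _ h' F hF
  have hbr : ∀ i j : ℤ, -1 ≤ i → -1 ≤ j →
      C.BracketEq (vM E H F w w i) (vM E H F w w j)
        (if -1 ≤ i + j then vM E H F w w (i + j) else 0) (pM1 i j) := by
    intro i j hi hj
    by_cases h1 : i = 1 ∧ j = 1
    · obtain ⟨rfl, rfl⟩ := h1
      rw [if_pos (by omega), show (1 : ℤ) + 1 = ((0 : ℕ) : ℤ) + 2 by norm_num, vM_p, vM_1,
        show pM1 1 1 = Pd + Pc 2 * Pl by simp [pM1]]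
      exact bracketEq_EE T.EE0 T.EE1 T.EEn
    rw [pM1_eq i j h1 hi hj, bracketEq_Pc]
    by_cases h2 : i = -1 ∧ j = -1
    · obtain ⟨rfl, rfl⟩ := h2
      rw [if_neg (by omega), smul_zero, vM_m1]
      exact hFF
    rw [if_pos (by omega)]
    exact table_pos t T w i j hi hj h1 h2
  refine ⟨vM E H F w w, ?_, hbr⟩
  refine C.freeBasis (fun q : {i : ℤ // -1 ≤ i} => ε * q.1) ?_ _ ?_ ?_ ?_ ?_ ?_
  · rintro ⟨a, ha⟩ ⟨b, hb⟩ hab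
    rw [Subtype.mk.injEq]
    rcases hε with rfl | rfl <;> simpa using hab
  · rintro ⟨i, hi⟩
    change Prp (vM E H F w w i) (C.bas (ε * i))
    rcases int_cases i with rfl | rfl | rfl | ⟨k, rfl⟩ | ⟨k, rfl⟩
    · simpa [vM_0] using hH
    · simpa [vM_1] using hE
    · simpa [vM_m1] using hF
    · simpa only [vM_p] using hw k
    · omega
  · rcases hε with rfl | rfl
    · exact ⟨⟨1, by norm_num⟩, by norm_num⟩
    · exact ⟨⟨-1, by norm_num⟩, by norm_num⟩
  · exact ⟨⟨0, by norm_num⟩, by norm_num⟩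
  · rcases hε with rfl | rfl
    · exact ⟨⟨-1, by norm_num⟩, by norm_num⟩
    · exact ⟨⟨1, by norm_num⟩, by norm_num⟩
  · rintro ⟨i, hi⟩ ⟨j, hj⟩ n
    refine (hbr i j hi hj).mem _ ?_ n
    split_ifs with h
    · exact C.dspan_mem (fun q : {i : ℤ // -1 ≤ i} => vM E H F w w q.1) ⟨i + j, h⟩
    · exact zero_mem _

open LieConformalAlgebra in
theorem isM2 (E H F : L) (t : C.Triple E H F)
    (hE : Prp E (C.bas 1)) (hH : Prp H (C.bas 0)) (hF : Prp F (C.bas (-1)))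
    (h : C.sp 1 1 ≠ 0) (h' : C.sp (-1) (-1) ≠ 0) : C.IsM2 := by
  obtain ⟨w, T, hw⟩ := C.exists_tail 1 E H F t hE h
  obtain ⟨w', T', hw'⟩ := C.exists_tail (-1) F (-H) E t.flip hF h'
  have hbr : ∀ i j : ℤ,
      C.BracketEq (vM E H F w w' i) (vM E H F w w' j) (vM E H F w w' (i + j)) (pM2 i j) := by
    intro i j
    by_cases h1 : i = 1 ∧ j = 1
    · obtain ⟨rfl, rfl⟩ := h1
      rw [show (1 : ℤ) + 1 = ((0 : ℕ) : ℤ) + 2 by norm_num, vM_p, vM_1,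
        show pM2 1 1 = Pd + Pc 2 * Pl by simp [pM2]]
      exact bracketEq_EE T.EE0 T.EE1 T.EEn
    by_cases h2 : i = -1 ∧ j = -1
    · obtain ⟨rfl, rfl⟩ := h2
      rw [show (-1 : ℤ) + (-1) = -(((0 : ℕ) : ℤ) + 2) by norm_num, vM_m, vM_m1,
        show pM2 (-1) (-1) = Pd + Pc 2 * Pl by simp [pM2]]
      exact bracketEq_EE T'.EE0 T'.EE1 T'.EEn
    rw [pM2_eq i j h1 h2, bracketEq_Pc]
    exact table_all t T T' i j h1 h2
  refine ⟨vM E H F w w', ?_, hbr⟩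
  refine C.freeBasis id Function.injective_id _ ?_ ⟨1, rfl⟩ ⟨0, rfl⟩ ⟨-1, rfl⟩ ?_
  · intro i
    change Prp (vM E H F w w' i) (C.bas i)
    rcases int_cases i with rfl | rfl | rfl | ⟨k, rfl⟩ | ⟨k, rfl⟩
    · simpa [vM_0] using hH
    · simpa [vM_1] using hE
    · simpa [vM_m1] using hF
    · simpa only [vM_p, one_mul] using hw k
    · simpa only [vM_m, neg_mul, one_mul] using hw' k
  · intro i j n
    exact (hbr i j).mem _ (C.dspan_mem _ _) n

open LieConformalAlgebra in
theorem isCurSl2 (E H F : L) (t : C.Triple E H F)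
    (hE : Prp E (C.bas 1)) (hH : Prp H (C.bas 0)) (hF : Prp F (C.bas (-1)))
    (h : C.sp 1 1 = 0) (h' : C.sp (-1) (-1) = 0) : C.IsCurSl2 := by
  have hEE := C.sp_eq _ h E hE
  have hFF := C.sp_eq _ h' F hF
  have hEH := t.HE.symm
  have hFH := t.HF.symm
  have hEF := t.FE.symm
  have hfree : C.IsFreePolyBasis (![E, H, F]) := by
    refine C.freeBasis (![1, 0, -1]) ?_ _ ?_ ⟨0, rfl⟩ ⟨1, rfl⟩ ⟨2, rfl⟩ ?_
    · decide
    · intro i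
      fin_cases i
      exacts [hE, hH, hF]
    · have mE := C.dspan_mem (![E, H, F]) 0
      have mH := C.dspan_mem (![E, H, F]) 1
      have mF := C.dspan_mem (![E, H, F]) 2
      have cc : ∀ a b x, C.Cst a b x → x ∈ C.dspan (![E, H, F]) → ∀ n,
          C.prd n a b ∈ C.dspan (![E, H, F]) := by
        intro a b x hx hm n
        rcases n with _ | n
        · rw [hx.1]; exact hm
        · rw [hx.2]; exact zero_mem _
      intro i j
      fin_cases i <;> fin_cases j
      · exact cc _ _ _ hEE (zero_mem _)
      · exact cc _ _ _ hEH (neg_mem (neg_mem mE))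
      · exact cc _ _ _ hEF (neg_mem (neg_mem mH))
      · exact cc _ _ _ t.HE (neg_mem mE)
      · exact cc _ _ _ t.HH (zero_mem _)
      · exact cc _ _ _ t.HF mF
      · exact cc _ _ _ t.FE (neg_mem mH)
      · exact cc _ _ _ hFH (neg_mem mF)
      · exact cc _ _ _ hFF (zero_mem _)
  obtain ⟨hli, hsp⟩ := hfree
  let φ : ↥(LieAlgebra.SpecialLinear.sl (Fin 2) ℂ) →ₗ[ℂ] L :=
    { toFun := fun A => A.1 0 1 • E + (A.1 1 0 * (-2)) • F + (A.1 0 0 * (-2)) • H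
      map_add' := by
        intro A B
        have e : ∀ i j, (A + B).1 i j = A.1 i j + B.1 i j := fun _ _ => rfl
        simp only [e]
        module
      map_smul' := by
        intro c A
        have e : ∀ i j, (c • A).1 i j = c * A.1 i j := fun _ _ => rfl
        simp only [e, RingHom.id_apply]
        module }
  have hφ : ∀ A, φ A = A.1 0 1 • E + (A.1 1 0 * (-2)) • F + (A.1 0 0 * (-2)) • H := fun A => rfl
  have htr : ∀ A : ↥(LieAlgebra.SpecialLinear.sl (Fin 2) ℂ), A.1 1 1 = - A.1 0 0 := by
    intro A
    have h1 : Matrix.trace A.1 = 0 := by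
      simpa using LinearMap.mem_ker.1 A.2
    rw [Matrix.trace_fin_two] at h1
    linear_combination h1
  have hmk : ∀ x y z : ℂ, ∃ A : ↥(LieAlgebra.SpecialLinear.sl (Fin 2) ℂ),
      A.1 0 1 = x ∧ A.1 1 0 = y ∧ A.1 0 0 = z := by
    intro x y z
    refine ⟨⟨!![z, x; y, -z], ?_⟩, by simp, by simp, by simp⟩
    refine LinearMap.mem_ker.2 ?_
    simp [Matrix.trace_fin_two]
  refine ⟨φ, ?_, ?_, ?_⟩
  · let Φ : (ℕ →₀ ↥(LieAlgebra.SpecialLinear.sl (Fin 2) ℂ)) →ₗ[ℂ] L :=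
      Finsupp.lsum ℂ (fun k => (C.D ^ k) ∘ₗ φ)
    have hΦ : (fun f : ℕ →₀ ↥(LieAlgebra.SpecialLinear.sl (Fin 2) ℂ) =>
        f.sum fun k x => (⇑C.D)^[k] (φ x)) = Φ := by
      funext f
      simp only [Φ, Finsupp.lsum_apply, Finsupp.sum, LinearMap.comp_apply, Module.End.pow_apply]
    rw [hΦ]
    constructor
    · rw [← LinearMap.ker_eq_bot, LinearMap.ker_eq_bot']
      intro f hf
      let g : Fin 3 × ℕ → ℂ := fun q =>
        (![(f q.2).1 0 1, (f q.2).1 0 0 * (-2), (f q.2).1 1 0 * (-2)] : Fin 3 → ℂ) q.1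
      have hs : ∑ q ∈ Finset.univ ×ˢ f.support, g q • (⇑C.D)^[q.2] ((![E, H, F] : Fin 3 → L) q.1)
          = 0 := by
        rw [Finset.sum_product_right, ← hf, ← hΦ]
        simp only [Finsupp.sum]
        refine Finset.sum_congr rfl fun k _ => ?_
        rw [Fin.sum_univ_three, hφ]
        simp only [← Module.End.pow_apply, map_add, map_smul]
        simp [g]
        abel
      have h0 := linearIndependent_iff'.1 hli _ g hs
      ext1 k
      by_contra hk
      have hks : k ∈ f.support := Finsupp.mem_support_iff.2 hk
      have a1 := h0 (0, k) (Finset.mem_product.2 ⟨Finset.mem_univ _, hks⟩)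
      have a2 := h0 (1, k) (Finset.mem_product.2 ⟨Finset.mem_univ _, hks⟩)
      have a3 := h0 (2, k) (Finset.mem_product.2 ⟨Finset.mem_univ _, hks⟩)
      simp [g] at a1 a2 a3
      apply hk
      apply Subtype.ext
      ext i j
      fin_cases i <;> fin_cases j
      · simpa using a2
      · simpa using a1
      · simpa using a3
      · simpa [a2] using htr (f k)
    · rw [← LinearMap.range_eq_top, ← top_le_iff, ← hsp, Submodule.span_le]
      rintro _ ⟨⟨i, k⟩, rfl⟩
      have hx : ∃ A, φ A = (![E, H, F] : Fin 3 → L) i := by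
        fin_cases i
        · obtain ⟨A, a, b, c⟩ := hmk 1 0 0
          exact ⟨A, by rw [hφ, a, b, c]; simp⟩
        · obtain ⟨A, a, b, c⟩ := hmk 0 0 (-1 / 2)
          exact ⟨A, by rw [hφ, a, b, c]; simp⟩
        · obtain ⟨A, a, b, c⟩ := hmk 0 (-1 / 2) 0
          exact ⟨A, by rw [hφ, a, b, c]; simp⟩
      obtain ⟨A, hA⟩ := hx
      refine ⟨Finsupp.single k A, ?_⟩
      simp [Φ, hA, Module.End.pow_apply]
  · intro A B
    rw [hφ, hφ, hφ]
    simp only [map_add, map_smul, LinearMap.add_apply, LinearMap.smul_apply, hEE.1, hFF.1, hEH.1,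
      hFH.1, hEF.1, t.HE.1, t.HF.1, t.FE.1, t.HH.1]
    simp only [LieSubalgebra.coe_bracket, Ring.lie_def, Matrix.sub_apply, Matrix.mul_apply,
      Fin.sum_univ_two, htr]
    module
  · intro n hn A B
    obtain ⟨m, rfl⟩ : ∃ m, n = m + 1 := ⟨n - 1, by omega⟩
    rw [hφ, hφ]
    simp only [map_add, map_smul, LinearMap.add_apply, LinearMap.smul_apply, hEE.2, hFF.2, hEH.2,
      hFH.2, hEF.2, t.HE.2, t.HF.2, t.FE.2, t.HH.2]
    simp

end ClassV

theorem classV_constant_case_classification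
    {L : Type} [AddCommGroup L] [Module ℂ L] (C : ClassV L)
    (h₁ : ∃ a : ℂ, a ≠ 0 ∧ C.sp (-1) 1 = Pc a)
    (h₀ : ∃ a : ℂ, a ≠ 0 ∧ C.sp 0 1 = Pc a) :
    (C.sp 1 1 = 0 → C.sp (-1) (-1) = 0 → C.toLieConformalAlgebra.IsCurSl2) ∧
    (C.sp 1 1 ≠ 0 → C.sp (-1) (-1) ≠ 0 → C.toLieConformalAlgebra.IsM2) ∧
    ((C.sp 1 1 = 0 ↔ C.sp (-1) (-1) ≠ 0) → C.toLieConformalAlgebra.IsM1) := by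
  obtain ⟨H, F, t, hH, hF⟩ := C.exists_triple h₁ h₀
  have hE : Prp (C.bas 1) (C.bas 1) :=
    ⟨1, one_ne_zero, C.bas_ne 1 C.supp_one, by simp⟩
  refine ⟨fun a b => C.isCurSl2 _ H F t hE hH hF a b, fun a b => C.isM2 _ H F t hE hH hF a b, ?_⟩
  intro hiff
  by_cases h : C.sp 1 1 = 0
  · have hH' : Prp (-H) (C.bas 0) := by
      obtain ⟨c, hc, hne, he⟩ := hH
      exact ⟨-c, neg_ne_zero.2 hc, neg_ne_zero.2 hne, by rw [neg_smul, ← he]⟩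
    exact C.isM1 (-1) (Or.inr rfl) F (-H) _ t.flip hF hH' (by simpa using hE)
      (hiff.1 h) (by simpa using h)
  · have h' : C.sp (-1) (-1) = 0 := by
      by_contra hh; exact h (hiff.2 hh)
    exact C.isM1 1 (Or.inl rfl) _ H F t hE hH hF h h'
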